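/- arXiv:1707.07789 — 10 statements merged into one kernel-verified Lean document; each statement's English description precedes it below -/
import Mathlib

section
/- Let G be a finite group and S ⊆ G \ {e} be a union of conjugacy classes of G (equivalently, S̄ = ∑_{s∈S} s lies in the center of ℤ[G]). Let χ₁, …, χ_r be the irreducible complex characters of G, of degrees n₁, …, n_r. Then the characteristic polynomial of the adjacency matrix of the Cayley graph C(G, S) equals ∏_{i=1}^{r} (X − λ_i)^{n_i²}, where λ_i = (1/n_i)·∑_{s∈S} χ_i(s); that is, the eigenvalues of C(G, S) are λ₁, …, λ_r with multiplicities n₁², …, n_r² respectively. -/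
/-!
Since `S` is stable under conjugation, Schur's lemma makes `∑_{s ∈ S} ρᵢ(s)` a scalar operator on
each irreducible representation `ρᵢ`, and comparing traces identifies the scalar as `λᵢ`
(`FDRep.sum_eq_smul_one`). Hence every matrix coefficient `x ↦ ρᵢ(x)_{ab}`, as a function on `G`,
is an eigenvector of the adjacency matrix with eigenvalue `λᵢ`. There are `nᵢ²` of them for each
`i`, so it remains to see that together they form a basis of the functions on `G`.

This follows from the decomposition `∑ᵢ nᵢ χᵢ = |G| δ₁` of the regular character
(`sum_finrank_mul_character`). Its value at `1` gives `∑ᵢ nᵢ² = |G|`, so the matrix `U` of matrix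
coefficients is square, and its values at the elements `x y⁻¹` say that
`(nᵢ / |G|) ρᵢ(y⁻¹)_{ba}` are the entries of a right inverse of `U`.

The decomposition itself comes from completeness of characters (`classFunction_eq_zero`): a class
function orthogonal to all irreducible characters acts as zero on every simple `ℂ[G]`-module, hence
on the semisimple module `ℂ[G]`, so it vanishes. It is applied to the difference of the two sides,
whose orthogonality to each `χⱼ` is the first orthogonality relation.
-/

open Matrix Polynomial CategoryTheory

/-- The adjacency matrix (over `ℂ`) of the Cayley graph `C(G, S)`. -/
noncomputable def cayleyAdjC (G : Type*) [Group G] [Fintype G] [DecidableEq G]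
    (S : Finset G) : Matrix G G ℂ :=
  Matrix.of fun x y => if y * x⁻¹ ∈ S then (1 : ℂ) else 0

/-- Schur's lemma for class functions: `∑ f(g) ρ(g)` commutes with the action of `G`. -/
theorem FDRep.exists_sum_eq_smul_one {G : Type} [Group G] [Fintype G] (V : FDRep ℂ G) [Simple V]
    (f : G → ℂ) (hf : ∀ g x, f (g * x * g⁻¹) = f x) :
    ∃ c : ℂ, ∑ g, f g • V.ρ g = c • (1 : V →ₗ[ℂ] V) := by
  have hcomm : ∀ h : G, V.ρ h * (∑ g, f g • V.ρ g) = (∑ g, f g • V.ρ g) * V.ρ h := by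
    intro h
    rw [Finset.mul_sum, Finset.sum_mul]
    refine Fintype.sum_equiv (MulAut.conj h).toEquiv _ _ fun g => ?_
    simp [hf, ← map_mul]
  let F : V ⟶ V :=
    ⟨InducedCategory.homMk (ModuleCat.ofHom (∑ g, f g • V.ρ g)), fun g => by
      ext1
      ext x
      exact (LinearMap.congr_fun (hcomm g) x).symm⟩
  obtain ⟨c, hc⟩ := endomorphism_simple_eq_smul_id ℂ F
  refine ⟨c, ?_⟩
  have := congrArg (fun φ : V ⟶ V => φ.hom.hom.hom) hc
  exact this.symm

theorem FDRep.finrank_ne_zero_of_simple {G : Type} [Group G] [Fintype G] (V : FDRep ℂ G)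
    [Simple V] : (Module.finrank ℂ V : ℂ) ≠ 0 := by
  intro h
  have h0 : Module.finrank ℂ V = 0 := by exact_mod_cast h
  have hs : Subsingleton V := Module.finrank_zero_iff.mp h0
  have h1 := (FDRep.simple_iff_char_is_norm_one V).mp inferInstance
  have h2 : ∀ g, V.character g = 0 := fun g => by
    have : V.ρ g = 0 := LinearMap.ext fun x => Subsingleton.elim _ _
    rw [FDRep.character, this, map_zero]
  simp only [h2, mul_zero, Finset.sum_const_zero] at h1
  exact NeZero.ne (Nat.card G : ℂ) h1.symm

/-- The scalar by which a class function acts on an irreducible representation, computed by taking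
traces. -/
theorem FDRep.sum_eq_smul_one {G : Type} [Group G] [Fintype G] (V : FDRep ℂ G) [Simple V]
    (f : G → ℂ) (hf : ∀ g x, f (g * x * g⁻¹) = f x) :
    ∑ g, f g • V.ρ g =
      ((1 / (Module.finrank ℂ V : ℂ)) * ∑ g, f g * V.character g) • (1 : V →ₗ[ℂ] V) := by
  obtain ⟨c, hc⟩ := V.exists_sum_eq_smul_one f hf
  have h := congrArg (LinearMap.trace ℂ V) hc
  rw [map_sum, map_smul, LinearMap.trace_one] at h
  have hn := V.finrank_ne_zero_of_simple
  have h' : ∑ g, f g * V.character g = c * Module.finrank ℂ V := by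
    rw [← smul_eq_mul, ← h]
    exact Finset.sum_congr rfl fun g _ => by rw [map_smul, smul_eq_mul]; rfl
  rw [hc, h']
  congr 1
  field_simp

/-- Irreducibility of a representation gives simplicity in `FDRep`; both amount to the character
having norm one. -/
theorem FDRep.simple_of_isIrreducible {G : Type} [Group G] [Fintype G] {W : Type}
    [AddCommGroup W] [Module ℂ W] [FiniteDimensional ℂ W] (ρ : Representation ℂ G W)
    [ρ.IsIrreducible] : Simple (FDRep.of ρ) := by
  have := invertibleOfNonzero (NeZero.ne (Nat.card G : ℂ))
  rw [FDRep.simple_iff_char_is_norm_one]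
  have h := Representation.char_orthonormal ρ ρ
  rw [if_pos ⟨Representation.Equiv.refl ρ⟩] at h
  exact (inv_mul_eq_one₀ (NeZero.ne (Nat.card G : ℂ))).mp h |>.symm

/-- The algebra homomorphism extending the representation attached to a `ℂ[G]`-module is the
original action of `ℂ[G]`. -/
theorem asAlgebraHom_ofModule' {G : Type} [Group G] (M : Type) [AddCommGroup M]
    [Module ℂ M] [Module (MonoidAlgebra ℂ G) M] [IsScalarTower ℂ (MonoidAlgebra ℂ G) M] :
    (Representation.ofModule' (k := ℂ) (G := G) M).asAlgebraHom = Algebra.lsmul ℂ ℂ M :=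
  (MonoidAlgebra.lift ℂ (M →ₗ[ℂ] M) G).apply_symm_apply _

theorem isIrreducible_ofModule' {G : Type} [Group G] (M : Type) [AddCommGroup M]
    [Module ℂ M] [Module (MonoidAlgebra ℂ G) M] [IsScalarTower ℂ (MonoidAlgebra ℂ G) M]
    [IsSimpleModule (MonoidAlgebra ℂ G) M] :
    (Representation.ofModule' (k := ℂ) (G := G) M).IsIrreducible := by
  rw [Representation.irreducible_iff_isSimpleModule_asModule]
  let ρ : Representation ℂ G M := Representation.ofModule' M
  let e : ρ.asModule ≃ₗ[MonoidAlgebra ℂ G] M :=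
    { ρ.asModuleEquiv.toAddEquiv with
      map_smul' := fun r x => by
        change ρ.asModuleEquiv (r • x) = r • ρ.asModuleEquiv x
        rw [Representation.asModuleEquiv_map_smul, asAlgebraHom_ofModule']; rfl }
  exact IsSimpleModule.congr e

/-- A class function orthogonal to all irreducible characters, viewed as an element of `ℂ[G]`,
kills every simple module: by Schur's lemma it acts as a scalar, whose trace is the vanishing
pairing with the character. -/
theorem smul_eq_zero_of_isSimpleModule {G : Type} [Group G] [Fintype G] (f : G → ℂ)
    (hf : ∀ g x, f (g * x * g⁻¹) = f x)
    (h0 : ∀ W : FDRep ℂ G, Simple W → ∑ g, f g * W.character g = 0)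
    (M : Type) [AddCommGroup M] [Module ℂ M] [Module (MonoidAlgebra ℂ G) M]
    [IsScalarTower ℂ (MonoidAlgebra ℂ G) M] [IsSimpleModule (MonoidAlgebra ℂ G) M]
    (hM : FiniteDimensional ℂ M) (x : M) :
    (∑ g, MonoidAlgebra.single g (f g) : MonoidAlgebra ℂ G) • x = 0 := by
  let ρ : Representation ℂ G M := Representation.ofModule' M
  have hirr : ρ.IsIrreducible := isIrreducible_ofModule' M
  have hs := FDRep.simple_of_isIrreducible ρ
  have h1 := (FDRep.of ρ).sum_eq_smul_one f hf
  rw [h0 _ hs, mul_zero, zero_smul] at h1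
  have h2 : ρ.asAlgebraHom (∑ g, MonoidAlgebra.single g (f g)) = 0 := by
    rw [← h1, map_sum]
    exact Finset.sum_congr rfl fun g _ => by
      rw [Representation.asAlgebraHom_single]; rfl
  rw [asAlgebraHom_ofModule'] at h2
  exact LinearMap.congr_fun h2 x

/-- Completeness of the irreducible characters: a class function orthogonal to all of them is zero,
because it annihilates the simple submodules of `ℂ[G]`, whose sum contains `1`. -/
theorem classFunction_eq_zero {G : Type} [Group G] [Fintype G] (f : G → ℂ)
    (hf : ∀ g x, f (g * x * g⁻¹) = f x)
    (h0 : ∀ W : FDRep ℂ G, Simple W → ∑ g, f g * W.character g = 0) : f = 0 := by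
  classical
  let z : MonoidAlgebra ℂ G := ∑ g, MonoidAlgebra.single g (f g)
  have hz : ∀ m : Submodule (MonoidAlgebra ℂ G) (MonoidAlgebra ℂ G),
      IsSimpleModule (MonoidAlgebra ℂ G) m → ∀ x ∈ m, z * x = 0 := by
    intro m hm x hx
    have hst : IsScalarTower ℂ (MonoidAlgebra ℂ G) m :=
      ⟨fun a b c => Subtype.ext (smul_assoc a b c.1)⟩
    have hfd : FiniteDimensional ℂ m :=
      FiniteDimensional.of_injective (m.restrictScalars ℂ).subtype Subtype.val_injective
    have := @smul_eq_zero_of_isSimpleModule G _ _ f hf h0 m _ _ _ hst hm hfd ⟨x, hx⟩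
    exact congrArg Subtype.val this
  have hz1 : z * 1 = 0 := by
    have hmem : (1 : MonoidAlgebra ℂ G) ∈
        sSup {m : Submodule (MonoidAlgebra ℂ G) (MonoidAlgebra ℂ G) |
          IsSimpleModule (MonoidAlgebra ℂ G) m} := by
      rw [IsSemisimpleModule.sSup_simples_eq_top]; trivial
    rw [sSup_eq_iSup'] at hmem
    generalize (1 : MonoidAlgebra ℂ G) = y at hmem ⊢
    induction hmem using Submodule.iSup_induction' with
    | mem i x hx => exact hz i.1 i.2 x hx
    | zero => exact mul_zero z
    | add x y _ _ hx hy => rw [mul_add, hx, hy, add_zero]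
  rw [mul_one] at hz1
  funext g
  have := congrArg (fun a : MonoidAlgebra ℂ G => a.coeff g) hz1
  simpa [z, Finsupp.single_apply] using this

/-- The regular character is `∑ᵢ nᵢ χᵢ`. -/
theorem sum_finrank_mul_character {G : Type} [Group G] [Fintype G] [DecidableEq G]
    {ι : Type} [Fintype ι] (V : ι → FDRep ℂ G)
    (hsimple : ∀ i, Simple (V i))
    (hdistinct : ∀ i j, Nonempty (V i ≅ V j) → i = j)
    (hcomplete : ∀ W : FDRep ℂ G, Simple W → ∃ i, Nonempty (W ≅ V i)) (g : G) :
    ∑ i, (Module.finrank ℂ (V i) : ℂ) * (V i).character g =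
      if g = 1 then (Fintype.card G : ℂ) else 0 := by
  classical
  have hcard : (Nat.card G : ℂ) ≠ 0 := NeZero.ne _
  have := invertibleOfNonzero hcard
  -- The inverses match the bilinear pairing `∑ f(g) χ(g)`, which carries no complex conjugation.
  let f : G → ℂ := fun g => (if g⁻¹ = 1 then (Fintype.card G : ℂ) else 0) -
    ∑ i, (Module.finrank ℂ (V i) : ℂ) * (V i).character g⁻¹
  have key : f = 0 := by
    refine classFunction_eq_zero f (fun g x => ?_) fun W hW => ?_
    · have hinv : (g * x * g⁻¹)⁻¹ = g * x⁻¹ * g⁻¹ := by group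
      simp only [f, hinv, FDRep.char_conj, conj_eq_one_iff]
    · obtain ⟨j, ⟨e⟩⟩ := hcomplete W hW
      rw [FDRep.char_iso e]
      have horth : ∀ i, ∑ x, (V j).character x * (V i).character x⁻¹ =
          if i = j then (Nat.card G : ℂ) else 0 := by
        intro i
        have h := FDRep.char_orthonormal (V j) (V i)
        rw [inv_mul_eq_iff_eq_mul₀ hcard] at h
        rw [h]
        by_cases hij : i = j
        · subst hij
          simp [Nonempty.intro (Iso.refl (V i))]
        · have : ¬ Nonempty (V j ≅ V i) := fun hn => hij (hdistinct j i hn).symm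
          simp [this, hij]
      simp only [f, sub_mul, Finset.sum_sub_distrib, inv_eq_one, ite_mul, zero_mul,
        Finset.sum_ite_eq', Finset.mem_univ, if_true, FDRep.char_one, Finset.sum_mul]
      rw [Finset.sum_comm]
      have : ∀ i, ∑ x, (Module.finrank ℂ (V i) : ℂ) * (V i).character x⁻¹ * (V j).character x =
          if i = j then (Module.finrank ℂ (V i) : ℂ) * (Nat.card G : ℂ) else 0 := by
        intro i
        rw [← mul_ite_zero, ← horth i, Finset.mul_sum]
        exact Finset.sum_congr rfl fun x _ => by ring
      simp only [this, Finset.sum_ite_eq', Finset.mem_univ, if_true, Nat.card_eq_fintype_card]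
      ring
  have := congrFun key g⁻¹
  simp only [f, inv_inv, Pi.zero_apply] at this
  exact (sub_eq_zero.mp this).symm

/-- Let `S ⊆ G \ {e}` be a union of conjugacy classes of the finite group `G`, and let
`(V i)_{i}` be a complete family of pairwise non-isomorphic irreducible complex
representations of `G`, with characters `χᵢ` of degrees `nᵢ`.  Then the characteristic
polynomial of the adjacency matrix of the Cayley graph `C(G, S)` equals
`∏ i (X − λᵢ)^{nᵢ²}` where `λᵢ = (1/nᵢ) ∑_{s ∈ S} χᵢ(s)`. -/
theorem cayley_charpoly_of_center {G : Type} [Group G] [Fintype G] [DecidableEq G]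
    (S : Finset G) (hS : (1 : G) ∉ S)
    (hconj : ∀ g s : G, s ∈ S → g * s * g⁻¹ ∈ S)
    {ι : Type} [Fintype ι] (V : ι → FDRep ℂ G)
    (hsimple : ∀ i, Simple (V i))
    (hdistinct : ∀ i j, Nonempty (V i ≅ V j) → i = j)
    (hcomplete : ∀ W : FDRep ℂ G, Simple W → ∃ i, Nonempty (W ≅ V i)) :
    (cayleyAdjC G S).charpoly =
      ∏ i, (X - C ((1 / (Module.finrank ℂ (V i) : ℂ)) * ∑ s ∈ S, (V i).character s)) ^
        (Module.finrank ℂ (V i)) ^ 2 := by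
  classical
  let n : ι → ℕ := fun i => Module.finrank ℂ (V i)
  let ρ : ∀ i, G → Matrix (Fin (n i)) (Fin (n i)) ℂ := fun i g =>
    LinearMap.toMatrixAlgEquiv (Module.finBasis ℂ (V i)) ((V i).ρ g)
  have hρmul : ∀ i g h, ρ i (g * h) = ρ i g * ρ i h := fun i g h => by simp [ρ]
  have hρtr : ∀ i g, (ρ i g).trace = (V i).character g := fun i g =>
    (LinearMap.trace_eq_matrix_trace ℂ (Module.finBasis ℂ (V i)) _).symm
  let lam : ι → ℂ := fun i =>
    (1 / (Module.finrank ℂ (V i) : ℂ)) * ∑ s ∈ S, (V i).character s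
  have hρS : ∀ i, ∑ s ∈ S, ρ i s = lam i • (1 : Matrix (Fin (n i)) (Fin (n i)) ℂ) := by
    intro i
    have := hsimple i
    have hmem : ∀ g x, g * x * g⁻¹ ∈ S ↔ x ∈ S := fun g x =>
      ⟨fun h => by simpa [mul_assoc] using hconj g⁻¹ _ h, hconj g x⟩
    have h := (V i).sum_eq_smul_one (fun g => if g ∈ S then 1 else 0)
      (fun g x => by simp only [hmem])
    simp only [ite_smul, one_smul, zero_smul, ite_mul, one_mul, zero_mul,
      Finset.sum_ite_mem, Finset.univ_inter] at h
    have h' := congrArg (LinearMap.toMatrixAlgEquiv (Module.finBasis ℂ (V i))) h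
    rwa [map_sum, map_smul, map_one] at h'
  have hcol := sum_finrank_mul_character V hsimple hdistinct hcomplete
  have hcard : (Fintype.card G : ℂ) ≠ 0 := NeZero.ne _
  -- `J` indexes all matrix coefficients of the irreducible representations.
  let J := Σ i, Fin (n i) × Fin (n i)
  have hJ : Fintype.card G = Fintype.card J := by
    have h := hcol 1
    simp only [FDRep.char_one, if_true] at h
    have : (Fintype.card J : ℂ) = Fintype.card G := by
      rw [← h]; simp [J, n]
    exact_mod_cast this.symm
  let U : Matrix G J ℂ := Matrix.of fun x j => ρ j.1 x j.2.1 j.2.2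
  let U' : Matrix J G ℂ := Matrix.of fun j x =>
    (n j.1 : ℂ) / Fintype.card G * ρ j.1 x⁻¹ j.2.2 j.2.1
  let D : Matrix J J ℂ := Matrix.diagonal fun j => lam j.1
  have hUU' : U * U' = 1 := by
    ext x y
    have h1 : (U * U') x y = (Fintype.card G : ℂ)⁻¹ *
        ∑ i, (Module.finrank ℂ (V i) : ℂ) * (V i).character (x * y⁻¹) := by
      rw [Matrix.mul_apply, Fintype.sum_sigma, Finset.mul_sum]
      refine Finset.sum_congr rfl fun i _ => ?_
      rw [← hρtr, hρmul, Matrix.trace, Fintype.sum_prod_type, Finset.mul_sum, Finset.mul_sum]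
      refine Finset.sum_congr rfl fun a _ => ?_
      rw [Matrix.diag_apply, Matrix.mul_apply, Finset.mul_sum, Finset.mul_sum]
      refine Finset.sum_congr rfl fun b _ => ?_
      simp only [U, U', Matrix.of_apply, n]
      ring
    rw [h1, hcol, Matrix.one_apply]
    simp only [mul_inv_eq_one]
    split_ifs <;> simp [hcard]
  -- A right inverse is two-sided because `G` and `J` have the same cardinality.
  have hU'U : U' * U = 1 := (Matrix.mul_eq_one_comm_of_card_eq _ _ _ hJ).mp hUU'
  have hAU : cayleyAdjC G S * U = U * D := by
    ext x ⟨i, a, b⟩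
    rw [Matrix.mul_diagonal, Matrix.mul_apply]
    have h1 : (∑ s ∈ S, ρ i (s * x)) a b = ρ i x a b * lam i := by
      simp only [hρmul]
      rw [← Finset.sum_mul, hρS, Matrix.smul_mul, one_mul, Matrix.smul_apply, smul_eq_mul, mul_comm]
    change _ = ρ i x a b * lam i
    rw [← h1, Matrix.sum_apply]
    simp only [cayleyAdjC, U, Matrix.of_apply, ite_mul, one_mul, zero_mul]
    -- The out-neighbours of `x` are the elements `s * x` with `s ∈ S`.
    rw [← Fintype.sum_equiv (Equiv.mulRight x) (fun s => if s ∈ S then ρ i (s * x) a b else 0) _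
      (fun s => by simp)]
    simp
  have hA : cayleyAdjC G S = U * (D * U') := by
    rw [← Matrix.mul_assoc, ← hAU, Matrix.mul_assoc, hUU', Matrix.mul_one]
  have hchar : (cayleyAdjC G S).charpoly = D.charpoly := by
    rw [hA, Matrix.charpoly_mul_comm_of_le _ _ hJ.ge, hJ, Nat.sub_self, pow_zero, one_mul,
      Matrix.mul_assoc, hU'U, Matrix.mul_one]
  rw [hchar, Matrix.charpoly_diagonal, Fintype.prod_sigma]
  refine Finset.prod_congr rfl fun i _ => ?_
  simp [lam, n, sq]
end

section
/- Let G be a finite group and S ⊆ G \ {e} be a union of conjugacy classes of G (equivalently, S̄ = ∑_{s∈S} s lies in the center of ℤ[G]). Then the Cayley graph C(G, S) is not a directed strongly regular graph with parameters (n, k, μ, λ, t) satisfying 0 < t < k. -/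
/-!
Since `S` is closed under conjugation, the adjacency matrix `A` of `C(G, S)` is normal, and the
claim holds for every normal adjacency matrix.

Write `T = Aᵀ`, `b = μ - λ`, `c = μ - t`, so that `A² + bA + c = μJ`, and put `N = A - T`,
`X = A + T + b`, `D = b² - 4c`. As `A` and `T` commute, `XN = 0` and `X² + N² = (2A + b)² = D + 4μJ`.
Hence `N⁴ = D N²`, and `Y = nX - (2k + b)J` satisfies `Y⁴ = n² D Y²`. Now `N` is antisymmetric
and `Y` is symmetric, so comparing traces gives `N = 0` if `D ≥ 0` and `Y = 0` if `D ≤ 0`.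

* If `N = 0`, every arc is reversed by an arc, so `t = k`.
* If `Y = 0`, then `X` is constant, with diagonal entries `b`, so `A i j + A j i = b` for `i ≠ j`.
  Either `b = 1`, the graph is a tournament and `t = 0`; or `A` is symmetric and again `t = k`.
-/

open Matrix

/-- The all-ones matrix. -/
def allOnes (V : Type*) [Fintype V] : Matrix V V ℤ :=
  Matrix.of fun _ _ => (1 : ℤ)

/-- `A` is the adjacency matrix of a directed strongly regular graph with
parameters `(n, k, μ, λ, t)`. -/
def IsDSRG {V : Type*} [Fintype V] [DecidableEq V] (A : Matrix V V ℤ)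
    (n k μ lam t : ℤ) : Prop :=
  (Fintype.card V : ℤ) = n ∧
  (∀ i j, A i j = 0 ∨ A i j = 1) ∧
  (∀ i, A i i = 0) ∧
  A * allOnes V = k • allOnes V ∧
  allOnes V * A = k • allOnes V ∧
  A * A = t • (1 : Matrix V V ℤ) + lam • A + μ • (allOnes V - 1 - A)

/-- The adjacency matrix of the Cayley graph `C(G, S)`. -/
def cayleyAdj (G : Type*) [Group G] [Fintype G] [DecidableEq G] (S : Finset G) :
    Matrix G G ℤ :=
  Matrix.of fun x y => if y * x⁻¹ ∈ S then (1 : ℤ) else 0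

/-- With `N = A - T` and `Y = n(A + T + b) - (2k + b)J`, these are the quartic relations
`N⁴ = D N²` and `Y⁴ = n² D Y²`, where `D = b² - 4c`. -/
lemma quartic_relations_comm {R : Type*} [CommRing R] (A T J n k b c u : R)
    (hA : A * A + b * A + c = u * J) (hT : T * T + b * T + c = u * J)
    (hAJ : A * J = k * J) (hTJ : T * J = k * J) (hJ : J * J = n * J) :
    (A - T) * (A - T) * ((A - T) * (A - T)) = (b ^ 2 - 4 * c) * ((A - T) * (A - T)) ∧
    ∀ Y, Y = n * (A + T + b) - (2 * k + b) * J →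
      Y * Y * (Y * Y) = (n ^ 2 * (b ^ 2 - 4 * c)) * (Y * Y) := by
  have hXN : (A + T + b) * (A - T) = 0 := by linear_combination hA - hT
  have hsq : (A + T + b) ^ 2 + (A - T) ^ 2 = b ^ 2 - 4 * c + 4 * u * J := by
    linear_combination 4 * hA - 2 * hXN
  have hJN : J * (A - T) = 0 := by linear_combination hAJ - hTJ
  have hXJ : (A + T + b) * J = (2 * k + b) * J := by linear_combination hAJ + hTJ
  generalize hN : A - T = N at *
  generalize hX : A + T + b = X at *
  generalize hm : 2 * k + b = m at *
  generalize hD : b ^ 2 - 4 * c = D at *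
  refine ⟨by linear_combination N ^ 2 * hsq - X * N * hXN + 4 * u * N * hJN, ?_⟩
  rintro Y hY
  have hX3 : X ^ 3 = D * X + 4 * u * m * J := by
    linear_combination X * hsq - N * hXN + 4 * u * hXJ
  have hYJ : Y * J = 0 := by rw [hY]; linear_combination n * hXJ - m * hJ
  have hY2 : Y * Y = n * (Y * X) := by linear_combination Y * hY - m * hYJ
  have hY4 : Y * Y * (Y * Y) = n ^ 3 * (Y * X ^ 3) := by
    linear_combination (Y * Y + n * X * Y + n ^ 2 * X ^ 2) * hY2
  rw [hY4, hX3]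
  linear_combination n ^ 3 * 4 * u * m * hYJ - n ^ 2 * D * hY2

/-- `quartic_relations_comm` for commuting elements of a possibly noncommutative ring, obtained by
working in the commutative subring they generate. -/
lemma quartic_relations {R : Type*} [Ring R] (A T J : R) (n k b c u : ℤ)
    (hcAT : A * T = T * A) (hcAJ : A * J = J * A) (hcTJ : T * J = J * T)
    (hA : A * A + b * A + c = u * J) (hT : T * T + b * T + c = u * J)
    (hAJ : A * J = k * J) (hTJ : T * J = k * J) (hJ : J * J = n * J) :
    (A - T) * (A - T) * ((A - T) * (A - T))
      = ((b ^ 2 - 4 * c : ℤ) : R) * ((A - T) * (A - T)) ∧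
    ∀ Y, Y = n * (A + T + b) - ((2 * k + b : ℤ) : R) * J →
      Y * Y * (Y * Y) = ((n ^ 2 * (b ^ 2 - 4 * c) : ℤ) : R) * (Y * Y) := by
  let s : Set R := {A, T, J}
  have hs : ∀ x ∈ s, ∀ y ∈ s, x * y = y * x := by
    rintro x (rfl | rfl | rfl) y (rfl | rfl | rfl) <;> first | rfl | simp only [*]
  have hc := Subring.isMulCommutative_closure hs
  let : CommRing (Subring.closure s) :=
    { (inferInstance : Ring (Subring.closure s)) with mul_comm := hc.is_comm.comm }
  let A' : Subring.closure s := ⟨A, Subring.subset_closure (by simp [s])⟩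
  let T' : Subring.closure s := ⟨T, Subring.subset_closure (by simp [s])⟩
  let J' : Subring.closure s := ⟨J, Subring.subset_closure (by simp [s])⟩
  obtain ⟨h1, h2⟩ := quartic_relations_comm A' T' J' (n : Subring.closure s) k b c u
    (Subtype.ext hA) (Subtype.ext hT) (Subtype.ext hAJ) (Subtype.ext hTJ) (Subtype.ext hJ)
  constructor
  · have := congrArg Subtype.val h1
    push_cast
    exact this
  · rintro Y rfl
    have := congrArg Subtype.val (h2 _ rfl)
    push_cast
    exact this

lemma trace_mul_transpose_eq {V : Type*} [Fintype V] (Z : Matrix V V ℤ) :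
    (Z * Zᵀ).trace = ∑ i, ∑ j, Z i j ^ 2 := by
  simp [Matrix.trace, Matrix.mul_apply, sq]

lemma eq_zero_of_trace_nonpos {V : Type*} [Fintype V] (Z : Matrix V V ℤ)
    (h : (Z * Zᵀ).trace ≤ 0) : Z = 0 := by
  rw [trace_mul_transpose_eq] at h
  have h0 := le_antisymm h (Finset.sum_nonneg fun i _ => Finset.sum_nonneg fun j _ => sq_nonneg _)
  ext i j
  have h1 := (Finset.sum_eq_zero_iff_of_nonneg
    (fun i _ => Finset.sum_nonneg fun j _ => sq_nonneg (Z i j))).1 h0 i (Finset.mem_univ _)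
  have h2 := (Finset.sum_eq_zero_iff_of_nonneg
    (fun j _ => sq_nonneg (Z i j))).1 h1 j (Finset.mem_univ _)
  simpa using h2

/-- If `P = ZZᵀ` satisfies `P² = dP` with `d ≤ 0`, then `0 ≤ tr P² = d tr P ≤ 0`, so `P` and hence
`Z` vanish. -/
lemma eq_zero_of_quartic {V : Type*} [Fintype V] (Z : Matrix V V ℤ) (d : ℤ) (hd : d ≤ 0)
    (h : Z * Zᵀ * (Z * Zᵀ) = d • (Z * Zᵀ)) : Z = 0 := by
  have h0 : 0 ≤ (Z * Zᵀ).trace := by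
    rw [trace_mul_transpose_eq]
    exact Finset.sum_nonneg fun i _ => Finset.sum_nonneg fun j _ => sq_nonneg _
  have hP : Z * Zᵀ = 0 := by
    apply eq_zero_of_trace_nonpos
    rw [Matrix.transpose_mul, Matrix.transpose_transpose, h, Matrix.trace_smul, smul_eq_mul]
    exact mul_nonpos_of_nonpos_of_nonneg hd h0
  apply eq_zero_of_trace_nonpos
  simp [hP]

/-- A DSRG with `0 < t < k` is neither symmetric (which would force `t = k`) nor free of pairs of
mutually reverse arcs (which would force `t = 0`). -/
lemma not_dsrg_of_entries {V : Type*} [Fintype V] [DecidableEq V] [Nonempty V]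
    (A : Matrix V V ℤ) (n k μ lam t : ℤ) (ht : 0 < t) (htk : t < k)
    (hA : IsDSRG A n k μ lam t)
    (h : (∀ i j, A i j = A j i) ∨ ∀ i j, A i j * A j i = 0) : False := by
  obtain ⟨-, h01, hdiag, hAJ, -, hsq⟩ := hA
  obtain ⟨i⟩ := ‹Nonempty V›
  have hk : ∑ j, A i j = k := by
    simpa [-zsmul_eq_mul, Matrix.mul_apply, allOnes] using congrFun (congrFun hAJ i) i
  have htt : ∑ j, A i j * A j i = t := by
    simpa [-zsmul_eq_mul, -zsmul_one, Matrix.mul_apply, allOnes, hdiag] using congrFun (congrFun hsq i) i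
  rcases h with h | h
  · have : ∑ j, A i j * A j i = ∑ j, A i j := Finset.sum_congr rfl fun j _ => by
      rw [h j i]
      rcases h01 i j with e | e <;> simp [e]
    omega
  · simp only [h, Finset.sum_const_zero] at htt
    omega

/-- The heart of the argument: a normal adjacency matrix does not give a DSRG with `0 < t < k`. -/
lemma not_dsrg_of_normal {V : Type*} [Fintype V] [DecidableEq V] [Nonempty V]
    (A : Matrix V V ℤ) (hn : A * Aᵀ = Aᵀ * A) (n k μ lam t : ℤ) (ht : 0 < t) (htk : t < k) :
    ¬ IsDSRG A n k μ lam t := by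
  intro hA
  apply not_dsrg_of_entries A n k μ lam t ht htk hA
  obtain ⟨hcard, h01, hdiag, hAJ, hJA, hsq⟩ := hA
  have hJt : (allOnes V)ᵀ = allOnes V := rfl
  have hTJ : Aᵀ * allOnes V = k • allOnes V := by
    simpa only [Matrix.transpose_mul, Matrix.transpose_smul, hJt] using congrArg Matrix.transpose hJA
  have hJT : allOnes V * Aᵀ = k • allOnes V := by
    simpa only [Matrix.transpose_mul, Matrix.transpose_smul, hJt] using congrArg Matrix.transpose hAJ
  have hJJ : allOnes V * allOnes V = n • allOnes V := by
    ext i j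
    simp [Matrix.mul_apply, allOnes, ← hcard]
  have hp : A * A + (μ - lam) • A + (μ - t) • (1 : Matrix V V ℤ) = μ • allOnes V := by
    rw [hsq]; module
  have hpT : Aᵀ * Aᵀ + (μ - lam) • Aᵀ + (μ - t) • (1 : Matrix V V ℤ) = μ • allOnes V := by
    have := congrArg Matrix.transpose hp
    simpa only [Matrix.transpose_add, Matrix.transpose_mul, Matrix.transpose_smul,
      Matrix.transpose_one, hJt] using this
  obtain ⟨h1, h2⟩ := quartic_relations A Aᵀ (allOnes V) n k (μ - lam) (μ - t) μ hn
    (hAJ.trans hJA.symm) (hTJ.trans hJT.symm)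
    (by simpa only [zsmul_eq_mul, mul_one] using hp)
    (by simpa only [zsmul_eq_mul, mul_one] using hpT)
    (by simpa only [zsmul_eq_mul] using hAJ) (by simpa only [zsmul_eq_mul] using hTJ)
    (by simpa only [zsmul_eq_mul] using hJJ)
  have hn0 : 0 < n := by rw [← hcard]; exact_mod_cast Fintype.card_pos
  rcases le_total 0 ((μ - lam) ^ 2 - 4 * (μ - t)) with hD | hD
  · left
    have hNt : (A - Aᵀ)ᵀ = -(A - Aᵀ) := by simp
    have hN : A - Aᵀ = 0 := by
      apply eq_zero_of_quartic _ (-((μ - lam) ^ 2 - 4 * (μ - t))) (by omega)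
      rw [hNt, mul_neg, neg_mul_neg, h1, ← zsmul_eq_mul, smul_neg, neg_smul, neg_neg]
    intro i j
    have := congrFun (congrFun hN i) j
    simp only [Matrix.sub_apply, Matrix.transpose_apply, Matrix.zero_apply] at this
    omega
  · set Y : Matrix V V ℤ := n • (A + Aᵀ + (μ - lam) • (1 : Matrix V V ℤ))
      - (2 * k + (μ - lam)) • allOnes V with hY
    have hYt : Yᵀ = Y := by
      simp only [hY, Matrix.transpose_sub, Matrix.transpose_smul, Matrix.transpose_add,
        Matrix.transpose_transpose, Matrix.transpose_one, hJt, add_comm Aᵀ A]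
    have hY0 : Y = 0 := by
      apply eq_zero_of_quartic _ (n ^ 2 * ((μ - lam) ^ 2 - 4 * (μ - t)))
        (mul_nonpos_of_nonneg_of_nonpos (sq_nonneg n) hD)
      rw [hYt, zsmul_eq_mul]
      exact h2 Y (by simp only [hY, zsmul_eq_mul, mul_one])
    have hent : ∀ i j, n * (A i j + A j i + (μ - lam) * (1 : Matrix V V ℤ) i j)
        = 2 * k + (μ - lam) := by
      intro i j
      have := congrFun (congrFun hY0 i) j
      simp only [hY, Matrix.sub_apply, Matrix.smul_apply, Matrix.add_apply,
        Matrix.transpose_apply, Matrix.zero_apply, smul_eq_mul, allOnes, Matrix.of_apply] at this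
      linarith
    have hb : ∀ i j, i ≠ j → A i j + A j i = μ - lam := by
      intro i j hij
      have e1 := hent i j
      have e2 := hent i i
      simp only [Matrix.one_apply_ne hij, Matrix.one_apply_eq, hdiag] at e1 e2
      have := mul_left_cancel₀ hn0.ne' (e1.trans e2.symm)
      linarith
    by_cases hb1 : μ - lam = 1
    · right
      intro i j
      by_cases hij : i = j
      · simp [hij, hdiag]
      · have := hb i j hij
        rcases h01 i j with e | e
        · simp [e]
        · have : A j i = 0 := by omega
          simp [this]
    · left
      intro i j
      by_cases hij : i = j
      · simp [hij]
      · have := hb i j hij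
        rcases h01 i j with e | e <;> rcases h01 j i with e' | e' <;> omega

/-- The `(x, z)` entries of `AAᵀ` and `AᵀA` count the common out-neighbours and the common
in-neighbours of `x` and `z`; up to conjugation, `y ↦ x y⁻¹ z` exchanges the two. -/
lemma cayleyAdj_normal {G : Type*} [Group G] [Fintype G] [DecidableEq G]
    (S : Finset G) (hconj : ∀ g s : G, s ∈ S → g * s * g⁻¹ ∈ S) :
    cayleyAdj G S * (cayleyAdj G S)ᵀ = (cayleyAdj G S)ᵀ * cayleyAdj G S := by
  have hiff : ∀ a b : G, a * b ∈ S ↔ b * a ∈ S := fun a b =>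
    ⟨fun h => by simpa [mul_assoc] using hconj b _ h,
      fun h => by simpa [mul_assoc] using hconj a _ h⟩
  ext x z
  simp only [Matrix.mul_apply, Matrix.transpose_apply, cayleyAdj, Matrix.of_apply]
  refine Fintype.sum_equiv
    (((Equiv.inv G).trans (Equiv.mulLeft x)).trans (Equiv.mulRight z)) _ _ fun y => ?_
  have e1 : x * (x * y⁻¹ * z)⁻¹ ∈ S ↔ y * z⁻¹ ∈ S := by
    rw [hiff x, hiff y]
    simp [mul_assoc]
  have e2 : z * (x * y⁻¹ * z)⁻¹ = y * x⁻¹ := by group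
  simp only [Equiv.trans_apply, Equiv.inv_apply, Equiv.coe_mulLeft, Equiv.coe_mulRight,
    e1, e2]
  exact mul_comm _ _

/-- If `S ⊆ G \ {e}` is a union of conjugacy classes of the finite group `G`,
then the Cayley graph `C(G, S)` is not a directed strongly regular graph with
parameters `(n, k, μ, λ, t)`, `0 < t < k`. -/
theorem cayley_central_not_dsrg {G : Type*} [Group G] [Fintype G] [DecidableEq G]
    (S : Finset G) (hS : (1 : G) ∉ S)
    (hconj : ∀ g s : G, s ∈ S → g * s * g⁻¹ ∈ S)
    (n k μ lam t : ℤ) (ht : 0 < t) (htk : t < k) :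
    ¬ IsDSRG (cayleyAdj G S) n k μ lam t :=
  not_dsrg_of_normal _ (cayleyAdj_normal S hconj) n k μ lam t ht htk
end

section
/- Let G be a finite group, M ⊆ G \ {e} a subset closed under taking inverses (M⁻¹ = M), and T a nonempty subset of N_G(M) \ (M ∪ {e}) that is antisymmetric, i.e. T ∩ T⁻¹ = ∅, where N_G(M) = {g ∈ G : g·M·g⁻¹ = M}. Then the Cayley graph C(G, M ∪ T) is not a directed strongly regular graph with parameters (n, k, μ, λ, t) satisfying 0 < t < k. -/
/-!
Write `A = M + T` for the adjacency matrices of the Cayley graphs of `M ∪ T`, `M` and `T`. The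
matrix `M` is symmetric, and `T` commutes with it because `T` normalizes `M`; moreover
`tr (T * T) = 0` because `T` contains no element together with its inverse.

An eigenvalue of a DSRG adjacency matrix is `k` or a root of `X² = (t - μ) + (λ - μ) X`. When
`0 < t < k` this quadratic has nonnegative discriminant (`IsDSRG.discr_nonneg`): otherwise every
eigenvalue other than the simple eigenvalue `k` has real part `(λ - μ) / 2`, and `tr A = 0` gives
`(n - 1) (μ - λ) = 2 k`, whence `μ - λ` is `1` or `2`; in both cases the valency equation
`k² = t + λ k + μ (n - 1 - k)` forces `k ∣ t`, which is impossible. So `A` has real spectrum.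

Given an eigenvalue `τ` of `T`, choose a common eigenvector of `T` and `M`, with eigenvalues `τ`
and `m`. Then `τ + m` is an eigenvalue of `A`, hence real, and `m` is real as `M` is symmetric, so
`τ` is real. Thus all eigenvalues of `T * T` are nonnegative reals, with sum `tr (T * T) = 0`.
But the all-ones vector is an eigenvector of `T * T` for the positive eigenvalue `|T|²`.
-/

open Matrix

/-! ### Eigenvalues of complex matrices -/

section Eigen

variable {V : Type*} [Fintype V] [DecidableEq V]

lemma isRoot_charpoly_iff (X : Matrix V V ℂ) (β : ℂ) :
    X.charpoly.IsRoot β ↔ ∃ v : V → ℂ, v ≠ 0 ∧ X *ᵥ v = β • v := by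
  rw [Polynomial.IsRoot, Matrix.eval_charpoly, ← Matrix.exists_mulVec_eq_zero_iff]
  refine exists_congr fun v => and_congr_right fun _ => ?_
  rw [Matrix.sub_mulVec, sub_eq_zero, eq_comm]
  have : (Matrix.scalar V β) *ᵥ v = β • v := by
    ext i
    simp [Matrix.scalar_apply, Matrix.mulVec_diagonal]
  rw [this]

lemma mem_roots_charpoly_iff (X : Matrix V V ℂ) (β : ℂ) :
    β ∈ X.charpoly.roots ↔ ∃ v : V → ℂ, v ≠ 0 ∧ X *ᵥ v = β • v := by
  rw [Polynomial.mem_roots X.charpoly_monic.ne_zero, isRoot_charpoly_iff]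

/-- Each eigenspace of `P` is stable under a matrix `Q` commuting with `P`, so it contains an
eigenvector of `Q`. -/
lemma exists_common_eigenvector {P Q : Matrix V V ℂ} (hPQ : P * Q = Q * P) {β : ℂ}
    {v : V → ℂ} (hv : v ≠ 0) (hPv : P *ᵥ v = β • v) :
    ∃ (m : ℂ) (u : V → ℂ), u ≠ 0 ∧ P *ᵥ u = β • u ∧ Q *ᵥ u = m • u := by
  let E := Module.End.eigenspace (Matrix.toLin' P) β
  have hmem : ∀ u, u ∈ E ↔ P *ᵥ u = β • u := fun u => by
    simp [E]
  have hmaps : ∀ u ∈ E, Matrix.toLin' Q u ∈ E := by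
    intro u hu
    rw [hmem] at hu ⊢
    rw [Matrix.toLin'_apply, Matrix.mulVec_mulVec, hPQ, ← Matrix.mulVec_mulVec, hu,
      Matrix.mulVec_smul]
  have : Nontrivial E :=
    ⟨⟨⟨v, (hmem v).2 hPv⟩, 0, fun h => hv (congrArg Subtype.val h)⟩⟩
  obtain ⟨m, hm⟩ := Module.End.exists_eigenvalue ((Matrix.toLin' Q).restrict hmaps)
  obtain ⟨u, hu⟩ := hm.exists_hasEigenvector
  refine ⟨m, u, fun h => hu.2 (Subtype.ext h), (hmem _).1 u.2, ?_⟩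
  simpa using congrArg Subtype.val hu.apply_eq_smul

lemma trace_re_eq_sum (X : Matrix V V ℂ) :
    X.trace.re = (X.charpoly.roots.map Complex.re).sum := by
  rw [Matrix.trace_eq_sum_roots_charpoly]
  exact map_multiset_sum Complex.reAddGroupHom _

/-- If all eigenvalues have real part `c`, the trace has real part `|V| c`. -/
lemma trace_re_of_eigenvalues_re {X : Matrix V V ℂ} {c : ℝ}
    (h : ∀ (β : ℂ) (v : V → ℂ), v ≠ 0 → X *ᵥ v = β • v → β.re = c) :
    X.trace.re = Fintype.card V * c := by
  have h1 : X.charpoly.roots.map Complex.re = X.charpoly.roots.map fun _ => c := by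
    refine Multiset.map_congr rfl fun β hβ => ?_
    obtain ⟨v, hv, hXv⟩ := (mem_roots_charpoly_iff X β).1 hβ
    exact h β v hv hXv
  rw [trace_re_eq_sum, h1, Multiset.map_const', Multiset.sum_replicate,
    ← (IsAlgClosed.splits X.charpoly).natDegree_eq_card_roots, Matrix.charpoly_natDegree_eq_dim,
    nsmul_eq_mul]

/-- If all eigenvalues of `X` have nonnegative real part and the real part of `tr X` vanishes, then
every eigenvalue has real part at most `0`. -/
lemma eigenvalue_re_nonpos_of_trace {X : Matrix V V ℂ}
    (h : ∀ (β : ℂ) (v : V → ℂ), v ≠ 0 → X *ᵥ v = β • v → 0 ≤ β.re)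
    (htr : X.trace.re = 0) {β : ℂ} {v : V → ℂ} (hv : v ≠ 0) (hXv : X *ᵥ v = β • v) :
    β.re ≤ 0 := by
  rw [trace_re_eq_sum] at htr
  rw [← htr]
  refine Multiset.single_le_sum ?_ _
    (Multiset.mem_map_of_mem _ ((mem_roots_charpoly_iff X β).2 ⟨v, hv, hXv⟩))
  intro x hx
  obtain ⟨γ, hγ, rfl⟩ := Multiset.mem_map.1 hx
  obtain ⟨u, hu, hXu⟩ := (mem_roots_charpoly_iff X γ).1 hγ
  exact h γ u hu hXu

/-- Every eigenvalue of `X * X` is the square of an eigenvalue of `X`. -/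
lemma exists_sq_of_eigenvalue_mul_self {X : Matrix V V ℂ} {w : ℂ} {v : V → ℂ} (hv : v ≠ 0)
    (h : (X * X) *ᵥ v = w • v) :
    ∃ (τ : ℂ) (u : V → ℂ), u ≠ 0 ∧ X *ᵥ u = τ • u ∧ τ ^ 2 = w := by
  obtain ⟨τ, hτ⟩ := IsAlgClosed.exists_pow_nat_eq w (n := 2) (by norm_num)
  by_cases hu : X *ᵥ v + τ • v = 0
  · exact ⟨-τ, v, hv, by rw [neg_smul]; exact eq_neg_of_add_eq_zero_left hu, by rw [neg_sq, hτ]⟩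
  · refine ⟨τ, _, hu, ?_, hτ⟩
    rw [Matrix.mulVec_add, Matrix.mulVec_mulVec, h, Matrix.mulVec_smul, smul_add, smul_smul, ← hτ,
      sq, add_comm]

open scoped ComplexOrder in
lemma eigenvalue_real_of_isHermitian {X : Matrix V V ℂ} (hX : X.IsHermitian) {m : ℂ} {v : V → ℂ}
    (hv : v ≠ 0) (h : X *ᵥ v = m • v) : m.im = 0 := by
  have h1 : star v ⬝ᵥ (X *ᵥ v) = m * (star v ⬝ᵥ v) := by
    rw [h, dotProduct_smul, smul_eq_mul]
  have h2 : star v ⬝ᵥ (X *ᵥ v) = star m * (star v ⬝ᵥ v) := by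
    rw [dotProduct_mulVec, ← hX.eq, ← Matrix.star_mulVec, h, star_smul, smul_dotProduct,
      smul_eq_mul]
  have h3 : star v ⬝ᵥ v ≠ 0 := fun h0 => hv (dotProduct_star_self_eq_zero.1 h0)
  have h4 := mul_right_cancel₀ h3 (h1.symm.trans h2)
  exact Complex.conj_eq_iff_im.1 h4.symm

end Eigen

/-! ### Roots of real quadratics -/

section Quadratic

lemma quadratic_im_eq_zero {p q : ℝ} (hd : 0 ≤ q ^ 2 + 4 * p) {α : ℂ}
    (h : α ^ 2 = p + q * α) : α.im = 0 := by
  have h1 := congrArg Complex.re h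
  have h2 := congrArg Complex.im h
  simp [sq] at h1 h2
  by_contra hb
  have h3 : α.re = q / 2 := by
    have : α.im * (2 * α.re - q) = 0 := by linarith
    rcases mul_eq_zero.1 this with h | h
    · exact absurd h hb
    · linarith
  have : 0 < α.im * α.im := mul_self_pos.2 hb
  rw [h3] at h1
  nlinarith

lemma quadratic_re_eq {p q : ℝ} (hd : q ^ 2 + 4 * p < 0) {α : ℂ}
    (h : α ^ 2 = p + q * α) : α.re = q / 2 := by
  have h1 := congrArg Complex.re h
  have h2 := congrArg Complex.im h
  simp [sq] at h1 h2
  have : α.im * (2 * α.re - q) = 0 := by linarith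
  rcases mul_eq_zero.1 this with h | h
  · rw [h] at h1
    nlinarith [sq_nonneg (2 * α.re - q)]
  · linarith

end Quadratic

/-! ### The spectrum of a directed strongly regular graph -/

section DSRG

variable {V : Type*} [Fintype V] [DecidableEq V] {A : Matrix V V ℤ} {n k μ lam t : ℤ}

/-- The matrix `A` with its entries viewed as complex numbers. -/
def toC (A : Matrix V V ℤ) : Matrix V V ℂ := A.map (Int.cast : ℤ → ℂ)

lemma toC_mul (A B : Matrix V V ℤ) : toC (A * B) = toC A * toC B :=
  Matrix.map_mul (f := Int.castRingHom ℂ)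

lemma toC_add (A B : Matrix V V ℤ) : toC (A + B) = toC A + toC B := by
  ext; simp [toC]

lemma IsDSRG.row_sum (h : IsDSRG A n k μ lam t) (i : V) : ∑ j, A i j = k := by
  have := congrFun (congrFun h.2.2.2.1 i) i
  simpa [Matrix.mul_apply, allOnes] using this

lemma IsDSRG.col_sum (h : IsDSRG A n k μ lam t) (j : V) : ∑ i, A i j = k := by
  have := congrFun (congrFun h.2.2.2.2.1 j) j
  simpa [Matrix.mul_apply, allOnes] using this

lemma IsDSRG.sq_apply (h : IsDSRG A n k μ lam t) (i j : V) :
    ∑ l, A i l * A l j =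
      (t - μ) * (1 : Matrix V V ℤ) i j + (lam - μ) * A i j + μ := by
  have := congrFun (congrFun h.2.2.2.2.2 i) j
  simp only [Matrix.mul_apply, allOnes, Matrix.add_apply, Matrix.sub_apply, Matrix.smul_apply,
    smul_eq_mul, Matrix.of_apply] at this
  rw [this]; ring

lemma IsDSRG.valency_le (h : IsDSRG A n k μ lam t) (i : V) : k ≤ n - 1 := by
  rw [← h.row_sum i, ← h.1]
  calc ∑ j, A i j ≤ ∑ j, (1 - if j = i then 1 else 0 : ℤ) := by
        refine Finset.sum_le_sum fun j _ => ?_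
        by_cases hj : j = i
        · subst hj; simp [h.2.2.1]
        · rcases h.2.1 i j with h0 | h0 <;> simp [h0, hj]
    _ = _ := by simp

/-- Counting the walks of length two that start at a vertex. -/
lemma IsDSRG.valency_eq (h : IsDSRG A n k μ lam t) (i : V) :
    k ^ 2 = t + lam * k + μ * (n - 1 - k) := by
  have h1 : ∑ j, ∑ l, A i l * A l j = k ^ 2 := by
    rw [Finset.sum_comm]
    simp_rw [← Finset.mul_sum, h.row_sum]
    rw [← Finset.sum_mul, h.row_sum, sq]
  simp_rw [h.sq_apply, Finset.sum_add_distrib, ← Finset.mul_sum, h.row_sum] at h1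
  simp [Matrix.one_apply, h.1] at h1
  linarith

/-- An eigenvector of a matrix with constant column sum `κ`, for an eigenvalue other than `κ`, has
coordinate sum `0`. -/
lemma eigenvector_sum {X : Matrix V V ℂ} {κ : ℂ} (hcol : ∀ j, ∑ i, X i j = κ) {α : ℂ} {v : V → ℂ}
    (hXv : X *ᵥ v = α • v) : α = κ ∨ ∑ i, v i = 0 := by
  have h1 : ∑ i, (X *ᵥ v) i = κ * ∑ i, v i := by
    simp only [Matrix.mulVec, dotProduct]
    rw [Finset.sum_comm]
    simp_rw [← Finset.sum_mul, hcol, ← Finset.mul_sum]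
  rw [hXv] at h1
  simp only [Pi.smul_apply, smul_eq_mul, ← Finset.mul_sum] at h1
  rcases eq_or_ne (∑ i, v i) 0 with h0 | h0
  · exact Or.inr h0
  · exact Or.inl (mul_right_cancel₀ h0 h1)

/-- The all-ones matrix kills an eigenvector with coordinate sum `0`, so the defining equation
`A² = t I + λ A + μ (J - I - A)` becomes a quadratic equation for the eigenvalue. -/
lemma IsDSRG.eigenvalue_quadratic (h : IsDSRG A n k μ lam t) {α : ℂ} {v : V → ℂ} (hv : v ≠ 0)
    (hAv : toC A *ᵥ v = α • v) (hs : ∑ i, v i = 0) :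
    α ^ 2 = (((t - μ : ℤ) : ℝ) : ℂ) + (((lam - μ : ℤ) : ℝ) : ℂ) * α := by
  obtain ⟨i, hi⟩ := Function.ne_iff.1 hv
  have h1 : ((toC A * toC A) *ᵥ v) i = α ^ 2 * v i := by
    rw [← Matrix.mulVec_mulVec, hAv, Matrix.mulVec_smul, hAv, smul_smul]
    simp [sq]
  have hi' : ∑ j, (A i j : ℂ) * v j = α * v i := by
    simpa [toC, Matrix.mulVec, dotProduct] using congrFun hAv i
  have h2 : ((toC A * toC A) *ᵥ v) i = ((t - μ : ℤ) + (lam - μ : ℤ) * α) * v i := by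
    rw [← toC_mul]
    simp only [toC, Matrix.mulVec, dotProduct, Matrix.map_apply, Matrix.mul_apply, h.sq_apply]
    have : ∀ j, (((t - μ) * (1 : Matrix V V ℤ) i j + (lam - μ) * A i j + μ : ℤ) : ℂ) * v j
        = (t - μ : ℤ) * (if i = j then v j else 0) + (lam - μ : ℤ) * ((A i j : ℂ) * v j)
          + μ * v j := by
      intro j
      by_cases hij : i = j
      · simp [Matrix.one_apply, hij]; ring
      · simp [hij]; ring
    simp_rw [this, Finset.sum_add_distrib, ← Finset.mul_sum, hs, hi']
    simp
    ring
  have h3 := mul_right_cancel₀ hi (h1.symm.trans h2)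
  rw [h3]; push_cast; rfl

/-- The discriminant of the quadratic satisfied by the eigenvalues other than `k` is nonnegative. -/
lemma IsDSRG.discr_nonneg (h : IsDSRG A n k μ lam t) [Nonempty V] (ht : 0 < t) (htk : t < k) :
    0 ≤ ((lam - μ : ℤ) : ℝ) ^ 2 + 4 * ((t - μ : ℤ) : ℝ) := by
  by_contra! hd
  obtain ⟨i₀⟩ := ‹Nonempty V›
  have hle := h.valency_le i₀
  have hval := h.valency_eq i₀
  have hn : (n : ℝ) ≠ 0 := by
    have : 0 < n := by linarith
    exact_mod_cast this.ne'
  have hcard : (Fintype.card V : ℝ) = n := by exact_mod_cast h.1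
  have hcardC : (Fintype.card V : ℂ) = ((n : ℝ) : ℂ) := by rw [← hcard]; simp
  obtain ⟨c, hc⟩ : ∃ c : ℝ, c = ((lam - μ : ℤ) : ℝ) / 2 := ⟨_, rfl⟩
  -- Subtracting a multiple of the all-ones matrix moves the eigenvalue `k` to `c`.
  obtain ⟨x, hx⟩ : ∃ x : ℝ, x = (k - c) / n := ⟨_, rfl⟩
  let D : Matrix V V ℂ := Matrix.of fun i j => (A i j : ℂ) - x
  have hxn : (n : ℝ) * x = k - c := by rw [hx]; field_simp
  have hxnC : ((n : ℝ) : ℂ) * (x : ℂ) = k - c := by exact_mod_cast congrArg Complex.ofReal hxn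
  have hcol : ∀ j, ∑ i, D i j = (c : ℂ) := by
    intro j
    have : ∑ i, (A i j : ℂ) = k := by exact_mod_cast h.col_sum j
    simp [D, this, hcardC]
    simp at hxnC
    rw [hxnC]; ring
  have hre : ∀ (β : ℂ) (v : V → ℂ), v ≠ 0 → D *ᵥ v = β • v → β.re = c := by
    intro β v hv hDv
    rcases eigenvector_sum hcol hDv with h1 | h1
    · rw [h1, Complex.ofReal_re]
    · have hAv : toC A *ᵥ v = β • v := by
        rw [← hDv]
        ext i
        simp [toC, D, Matrix.mulVec, dotProduct, sub_mul, Finset.sum_sub_distrib,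
          ← Finset.mul_sum, h1]
      rw [quadratic_re_eq hd (h.eigenvalue_quadratic hv hAv h1), hc]
  have htr := trace_re_of_eigenvalues_re hre
  have htr' : D.trace.re = -((n : ℝ) * x) := by
    simp [D, Matrix.trace, h.2.2.1, hcard]
  rw [htr', hxn, hcard, hc] at htr
  have key : (n - 1) * (μ - lam) = 2 * k := by
    have : ((n : ℝ) - 1) * (μ - lam) = 2 * k := by push_cast at htr; linarith
    exact_mod_cast this
  obtain ⟨d, hdd⟩ : ∃ d, d = μ - lam := ⟨_, rfl⟩
  rw [← hdd] at key
  have hd1 : 0 < d := by nlinarith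
  have hd2 : d ≤ 2 := by nlinarith
  -- The valency equation will give `k ∣ t`, which contradicts `0 < t < k`.
  have hno : ∀ j : ℤ, t ≠ k * j := by
    intro j hj
    have : 0 < j := by nlinarith
    nlinarith
  have hl : lam = μ - d := by linarith
  interval_cases d
  · have : n - 1 = 2 * k := by linarith
    rw [this, hl] at hval
    exact hno (k + 1 - 2 * μ) (by linarith)
  · have : n - 1 = k := by linarith
    rw [this] at hval
    exact hno (k - lam) (by linarith)

/-- All eigenvalues of `A` are real when `0 < t < k`. -/
lemma IsDSRG.eigenvalue_im (h : IsDSRG A n k μ lam t) [Nonempty V] (ht : 0 < t) (htk : t < k)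
    {α : ℂ} {v : V → ℂ} (hv : v ≠ 0) (hAv : toC A *ᵥ v = α • v) : α.im = 0 := by
  have hcol : ∀ j, ∑ i, toC A i j = (k : ℂ) := fun j => by
    simp only [toC, Matrix.map_apply]
    exact_mod_cast h.col_sum j
  rcases eigenvector_sum hcol hAv with h1 | h1
  · rw [h1, Complex.intCast_im]
  · exact quadratic_im_eq_zero (h.discr_nonneg ht htk) (h.eigenvalue_quadratic hv hAv h1)

end DSRG

/-! ### Cayley graphs -/

section Cayley

variable {G : Type*} [Group G] [Fintype G] [DecidableEq G]

lemma cayleyAdj_union {M T : Finset G} (h : ∀ g ∈ T, g ∉ M) :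
    cayleyAdj G (M ∪ T) = cayleyAdj G M + cayleyAdj G T := by
  ext x y
  simp only [cayleyAdj, Matrix.of_apply, Matrix.add_apply, Finset.mem_union]
  by_cases h1 : y * x⁻¹ ∈ T
  · simp [h1, h _ h1]
  · simp [h1]

/-- As `T` normalizes `M`, the products `s * m` and `m' * s` with `s ∈ T` and `m, m' ∈ M` run over
the same group elements, with the same multiplicities. -/
lemma cayleyAdj_comm {M T : Finset G} (h : ∀ g ∈ T, M.image (fun m => g * m * g⁻¹) = M) :
    cayleyAdj G T * cayleyAdj G M = cayleyAdj G M * cayleyAdj G T := by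
  have hmem : ∀ s ∈ T, ∀ g, s⁻¹ * g ∈ M ↔ g * s⁻¹ ∈ M := by
    intro s hs g
    conv_rhs => rw [← h s hs]
    rw [Finset.mem_image]
    constructor
    · exact fun hg => ⟨_, hg, by group⟩
    · rintro ⟨m, hm, hg⟩
      have : s⁻¹ * g = m := by rw [← mul_right_cancel hg]; group
      rwa [this]
  ext x y
  simp only [Matrix.mul_apply, cayleyAdj, Matrix.of_apply]
  -- The walk `x → z → y` taking a `T`-step `s` first corresponds to the one taking `s` last.
  refine Fintype.sum_equiv
    (((Equiv.inv G).trans (Equiv.mulLeft x)).trans (Equiv.mulRight y)) _ _ fun z => ?_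
  have e1 : x * z⁻¹ * y * x⁻¹ = (z * x⁻¹)⁻¹ * (y * x⁻¹) := by group
  have e2 : y * (x * z⁻¹ * y)⁻¹ = z * x⁻¹ := by group
  have e3 : y * z⁻¹ = y * x⁻¹ * (z * x⁻¹)⁻¹ := by group
  simp only [Equiv.trans_apply, Equiv.inv_apply, Equiv.coe_mulLeft, Equiv.coe_mulRight, e1, e2, e3]
  by_cases hz : z * x⁻¹ ∈ T
  · simp only [hmem _ hz, hz, if_true, one_mul, mul_one]
  · simp only [hz, if_false, zero_mul, mul_zero]

lemma cayleyAdj_isHermitian {M : Finset G} (h : ∀ m ∈ M, m⁻¹ ∈ M) :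
    (toC (cayleyAdj G M)).IsHermitian := by
  ext x y
  have : x * y⁻¹ ∈ M ↔ y * x⁻¹ ∈ M :=
    ⟨fun hm => by simpa using h _ hm, fun hm => by simpa using h _ hm⟩
  simp [toC, cayleyAdj, this]

lemma trace_cayleyAdj_mul_self {T : Finset G} (h : ∀ g ∈ T, g⁻¹ ∉ T) :
    (cayleyAdj G T * cayleyAdj G T).trace = 0 := by
  refine Finset.sum_eq_zero fun x _ => ?_
  rw [Matrix.diag_apply, Matrix.mul_apply]
  refine Finset.sum_eq_zero fun z _ => ?_
  simp only [cayleyAdj, Matrix.of_apply]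
  by_cases hz : z * x⁻¹ ∈ T
  · have : x * z⁻¹ ∉ T := by simpa using h _ hz
    simp [this]
  · simp [hz]

/-- The all-ones vector is an eigenvector for the eigenvalue `|T|`. -/
lemma cayleyAdj_mulVec_one (T : Finset G) :
    toC (cayleyAdj G T) *ᵥ 1 = (T.card : ℂ) • (1 : G → ℂ) := by
  ext x
  have : ∑ y : G, (if y * x⁻¹ ∈ T then (1 : ℂ) else 0) = ∑ s : G, if s ∈ T then (1 : ℂ) else 0 :=
    Fintype.sum_equiv (Equiv.mulRight x⁻¹) _ _ fun _ => rfl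
  simpa [toC, cayleyAdj, Matrix.mulVec, dotProduct] using this

end Cayley

/-- Let `M ⊆ G \ {e}` be closed under inverses and let `T` be a nonempty
antisymmetric subset of `N_G(M) \ (M ∪ {e})`.  Then the Cayley graph
`C(G, M ∪ T)` is not a DSRG with parameters `(n, k, μ, λ, t)`, `0 < t < k`. -/
theorem cayley_normalizer_not_dsrg {G : Type*} [Group G] [Fintype G] [DecidableEq G]
    (M T : Finset G)
    (hM1 : (1 : G) ∉ M) (hMinv : ∀ m ∈ M, m⁻¹ ∈ M)
    (hTne : T.Nonempty)
    (hTnorm : ∀ g ∈ T, M.image (fun m => g * m * g⁻¹) = M)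
    (hTM : ∀ g ∈ T, g ∉ M) (hT1 : (1 : G) ∉ T)
    (hTanti : ∀ g ∈ T, g⁻¹ ∉ T)
    (n k μ lam t : ℤ) (ht : 0 < t) (htk : t < k) :
    ¬ IsDSRG (cayleyAdj G (M ∪ T)) n k μ lam t := by
  intro h
  have hA : toC (cayleyAdj G (M ∪ T)) = toC (cayleyAdj G M) + toC (cayleyAdj G T) := by
    rw [cayleyAdj_union hTM, toC_add]
  have hcomm : toC (cayleyAdj G T) * toC (cayleyAdj G M)
      = toC (cayleyAdj G M) * toC (cayleyAdj G T) := by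
    rw [← toC_mul, ← toC_mul, cayleyAdj_comm hTnorm]
  have hreal : ∀ (τ : ℂ) (v : G → ℂ), v ≠ 0 → toC (cayleyAdj G T) *ᵥ v = τ • v → τ.im = 0 := by
    intro τ v hv hTv
    obtain ⟨m, u, hu, hTu, hMu⟩ := exists_common_eigenvector hcomm hv hTv
    have hm := eigenvalue_real_of_isHermitian (cayleyAdj_isHermitian hMinv) hu hMu
    have hmτ := h.eigenvalue_im ht htk (α := m + τ) hu (by
      rw [hA, Matrix.add_mulVec, hMu, hTu, add_smul])
    rw [Complex.add_im, hm, zero_add] at hmτ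
    exact hmτ
  have hnonneg : ∀ (w : ℂ) (v : G → ℂ), v ≠ 0 →
      (toC (cayleyAdj G T) * toC (cayleyAdj G T)) *ᵥ v = w • v → 0 ≤ w.re := by
    intro w v hv hw
    obtain ⟨τ, u, hu, hTu, rfl⟩ := exists_sq_of_eigenvalue_mul_self hv hw
    rw [sq, Complex.mul_re, hreal τ u hu hTu]
    nlinarith [mul_self_nonneg τ.re]
  have htr : (toC (cayleyAdj G T) * toC (cayleyAdj G T)).trace.re = 0 := by
    have := congrArg (Int.cast : ℤ → ℂ) (trace_cayleyAdj_mul_self hTanti)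
    rw [← toC_mul]
    simp only [Matrix.trace, Matrix.diag_apply, Int.cast_sum, Int.cast_zero] at this
    simp only [Matrix.trace, Matrix.diag_apply, toC, Matrix.map_apply, this, Complex.zero_re]
  have hle := eigenvalue_re_nonpos_of_trace hnonneg htr (β := (T.card : ℂ) * T.card)
    (v := 1) one_ne_zero (by
      rw [← Matrix.mulVec_mulVec, cayleyAdj_mulVec_one, Matrix.mulVec_smul, cayleyAdj_mulVec_one,
        smul_smul])
  have hpos : (0 : ℝ) < T.card := by exact_mod_cast hTne.card_pos
  simp at hle
  nlinarith
end

section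
/- Let G be a finite group and S = C ∪ T ⊆ G \ {e}, where C is a union of conjugacy classes of G, and T is a nonempty antisymmetric subset of G (i.e. T ∩ T⁻¹ = ∅) with C ∩ T = ∅. Then the Cayley graph C(G, S) is not a directed strongly regular graph with parameters (n, k, μ, λ, t) satisfying 0 < t < k. -/
/-!
Write `A` for the adjacency matrix over `ℝ`, `J` for the all-ones matrix, and shift `A` by
`(λ - μ) / 2` to a matrix `B` with `B² = δ + μ J`.  The row and column sums
of `B` are `b = k - (λ - μ) / 2`.

* **`δ > 0`.**  If `δ ≤ 0`, the trace of `B` is `b` (`trace_eq_of_nonpos`), because on the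
  complement of the constant vectors the eigenvalues are `± √δ`, in conjugate pairs.  As
  `tr A = 0`, this gives `2k = (n - 1)(μ - λ)`, so `n - 1 ∈ {k, 2k}`, and counting walks of
  length two from a vertex gives `k ∣ t`, contradicting `0 < t < k`.
* **A form making `B` self-adjoint.**  The matrix `H = δ + Bᵀ B` is positive definite,
  `H B = Bᵀ H`, and `H` commutes with everything that commutes with both `B` and `Bᵀ`, in
  particular with the matrices of conjugation-closed sets (`exists_form`).
* **`C⁻¹ ⊆ C ∪ T`.**  Let `N` be the difference of the matrices of `C` and `C⁻¹`.  It is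
  skew-symmetric and commutes with `H`, so `tr (A N) = 0` (`trace_mul_skew`); this says
  `|S ∩ C⁻¹| = |S ∩ C| = |C|` for `S = C ∪ T`.
* **Conclusion.**  Now `U = C ∪ C⁻¹` is a symmetric conjugation-closed subset of `S`, and the
  matrix `X` of `S \ U ⊆ T` is again self-adjoint for `H`, while `tr X² = 0` since `T` is
  antisymmetric.  Hence `X = 0` (`eq_zero_of_trace_sq`), so `S = U` is symmetric and `t = k`,
  a contradiction.
-/

open Matrix

/-- The all-ones real matrix. -/
def onesR (V : Type*) : Matrix V V ℝ := Matrix.of fun _ _ => (1 : ℝ)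

/-- The adjacency matrix of the Cayley graph `C(G, S)`, with real entries. -/
def cayR {G : Type*} [Group G] [DecidableEq G] (S : Finset G) : Matrix G G ℝ :=
  Matrix.of fun x y => if y * x⁻¹ ∈ S then (1 : ℝ) else 0

/-! ### Traces and forms of real matrices -/

section MatrixLemmas

lemma onesR_transpose {V : Type*} : (onesR V)ᵀ = onesR V := by
  ext i j; simp [onesR]

/-- The trace of a product of a symmetric and a skew-symmetric matrix vanishes. -/
lemma trace_symm_mul_skew {V : Type*} [Fintype V] (P N : Matrix V V ℝ) (hP : Pᵀ = P) (hN : Nᵀ = -N) :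
    (P * N).trace = 0 := by
  have h : (P * N).trace = -(P * N).trace := by
    conv_lhs => rw [← Matrix.trace_transpose, Matrix.transpose_mul, hP, hN, neg_mul,
      Matrix.trace_neg, Matrix.trace_mul_comm]
  linarith

variable {V : Type*} [Fintype V] [DecidableEq V]

lemma posDef_form (B : Matrix V V ℝ) {δ : ℝ} (hδ : 0 < δ) :
    (δ • (1 : Matrix V V ℝ) + Bᵀ * B).PosDef := by
  have h1 : (δ • (1 : Matrix V V ℝ)).PosDef := Matrix.PosDef.one.smul hδ
  have h2 : (Bᵀ * B).PosSemidef := by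
    simpa using Matrix.posSemidef_conjTranspose_mul_self B
  exact h1.add_posSemidef h2

lemma form_symm (B : Matrix V V ℝ) (δ : ℝ) :
    (δ • (1 : Matrix V V ℝ) + Bᵀ * B)ᵀ = δ • (1 : Matrix V V ℝ) + Bᵀ * B := by
  simp

/-- For `δ < 0` the matrix `H = -δ + Bᵀ B` satisfies `H B = -δ (B - Bᵀ) + μ b J`, so that up to
the constant vectors `B` is skew-adjoint for `H`; for `δ = 0` the matrix `B - (b / n) J` is
nilpotent. -/
lemma trace_eq_of_nonpos [Nonempty V] (B : Matrix V V ℝ) (δ μ b : ℝ) (hδ : δ ≤ 0)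
    (hBB : B * B = δ • (1 : Matrix V V ℝ) + μ • onesR V)
    (hBJ : B * onesR V = b • onesR V) (hJB : onesR V * B = b • onesR V)
    (hb : b ^ 2 = δ + μ * Fintype.card V) : B.trace = b := by
  have hn : (Fintype.card V : ℝ) ≠ 0 := by simp
  have hJJ : onesR V * onesR V = (Fintype.card V : ℝ) • onesR V := by
    ext i j; simp [onesR, Matrix.mul_apply]
  have htJ : (onesR V).trace = Fintype.card V := by simp [onesR, Matrix.trace]
  have hBtJ : Bᵀ * onesR V = b • onesR V := by
    have := congrArg Matrix.transpose hJB
    simpa [Matrix.transpose_mul, onesR_transpose] using this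
  rcases hδ.lt_or_eq with hδ | rfl
  · have hpos := posDef_form B (neg_pos.2 hδ)
    have hsymm := form_symm B (-δ)
    set H := (-δ) • (1 : Matrix V V ℝ) + Bᵀ * B with hH
    have hunit : IsUnit H.det := (Matrix.isUnit_iff_isUnit_det H).1 hpos.isUnit
    have hHB : H * B = (-δ) • (B - Bᵀ) + (μ * b) • onesR V := by
      rw [hH, add_mul, Matrix.mul_assoc, hBB, mul_add, Matrix.mul_smul, Matrix.mul_smul, hBtJ]
      simp only [Matrix.smul_mul, one_mul, mul_one]
      module
    have hHJ : H * onesR V = (b ^ 2 - δ) • onesR V := by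
      rw [hH, add_mul, Matrix.mul_assoc, hBJ, Matrix.mul_smul, hBtJ]
      simp only [Matrix.smul_mul, one_mul]
      module
    have hne : b ^ 2 - δ ≠ 0 := by nlinarith [sq_nonneg b]
    have hiJ : H⁻¹ * onesR V = (b ^ 2 - δ)⁻¹ • onesR V := by
      have h1 : H⁻¹ * (H * onesR V) = onesR V := Matrix.nonsing_inv_mul_cancel_left _ _ hunit
      rw [hHJ, Matrix.mul_smul] at h1
      rw [← h1, smul_smul, inv_mul_cancel₀ hne, one_smul, h1]
    have hB : B = H⁻¹ * (H * B) := (Matrix.nonsing_inv_mul_cancel_left _ _ hunit).symm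
    have hskew : (H⁻¹ * (B - Bᵀ)).trace = 0 := by
      apply trace_symm_mul_skew
      · rw [Matrix.transpose_nonsing_inv, hsymm]
      · simp
    rw [hB, hHB, mul_add, Matrix.mul_smul, Matrix.mul_smul, hiJ, Matrix.trace_add,
      Matrix.trace_smul, hskew, Matrix.trace_smul, Matrix.trace_smul, htJ]
    simp only [smul_eq_mul]
    field_simp
    linear_combination (-b) * hb
  · have hnil : IsNilpotent (B - (b / Fintype.card V) • onesR V) := by
      refine ⟨2, ?_⟩
      rw [pow_two, sub_mul, mul_sub, mul_sub]
      simp only [Matrix.smul_mul, Matrix.mul_smul, hBB, hBJ, hJB, hJJ, smul_smul, zero_smul,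
        zero_add, ← sub_smul]
      rw [show μ - b / Fintype.card V * b - (b / Fintype.card V * b - b / Fintype.card V *
        (b / Fintype.card V * Fintype.card V)) = 0 by
          field_simp; linarith, zero_smul]
    have h0 := (Matrix.isNilpotent_trace_of_isNilpotent hnil).eq_zero
    rw [Matrix.trace_sub, Matrix.trace_smul, htJ, smul_eq_mul, div_mul_cancel₀ _ hn] at h0
    linarith

/-- A positive definite form `H` for which `B` is self-adjoint: average the standard one over
`B / √δ`, which is an involution up to `J`. -/
lemma exists_form (B : Matrix V V ℝ) (δ μ b : ℝ) (hδ : 0 < δ)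
    (hBB : B * B = δ • (1 : Matrix V V ℝ) + μ • onesR V)
    (hJB : onesR V * B = b • onesR V) :
    ∃ H : Matrix V V ℝ, H.PosDef ∧ H * B = Bᵀ * H ∧
      ∀ Y, Y * B = B * Y → Y * Bᵀ = Bᵀ * Y → Y * H = H * Y := by
  have hBtJ : Bᵀ * onesR V = b • onesR V := by
    have := congrArg Matrix.transpose hJB
    simpa [Matrix.transpose_mul, onesR_transpose] using this
  refine ⟨δ • (1 : Matrix V V ℝ) + Bᵀ * B, posDef_form B hδ, ?_, ?_⟩
  · have hBtBt : Bᵀ * Bᵀ = δ • (1 : Matrix V V ℝ) + μ • onesR V := by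
      rw [← Matrix.transpose_mul, hBB]; simp [onesR_transpose]
    rw [add_mul, mul_add, Matrix.mul_assoc, hBB, ← Matrix.mul_assoc, hBtBt, mul_add, add_mul]
    simp only [Matrix.smul_mul, Matrix.mul_smul, one_mul, mul_one, hBtJ, hJB]
    abel
  · intro Y h1 h2
    rw [mul_add, add_mul, ← Matrix.mul_assoc, h2, Matrix.mul_assoc, h1, Matrix.mul_assoc]
    simp

lemma trace_mul_skew (H B N : Matrix V V ℝ) (hH : H.PosDef) (hHB : H * B = Bᵀ * H)
    (hHN : N * H = H * N) (hBN : N * B = B * N) (hN : Nᵀ = -N) : (B * N).trace = 0 := by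
  have hunit : IsUnit H.det := (Matrix.isUnit_iff_isUnit_det H).1 hH.isUnit
  have h1 : (B * N).trace = (Bᵀ * N).trace := by
    calc (B * N).trace = (H⁻¹ * (H * B * N)).trace := by
          rw [Matrix.mul_assoc, Matrix.nonsing_inv_mul_cancel_left _ _ hunit]
      _ = (Bᵀ * N * H * H⁻¹).trace := by
          rw [hHB, Matrix.trace_mul_comm, Matrix.mul_assoc Bᵀ H, ← hHN, ← Matrix.mul_assoc Bᵀ]
      _ = (Bᵀ * N).trace := by rw [Matrix.mul_nonsing_inv_cancel_right _ _ hunit]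
  have h2 : (Bᵀ * N).trace = -(B * N).trace := by
    rw [← Matrix.trace_transpose, Matrix.transpose_mul, hN, Matrix.transpose_transpose, neg_mul,
      Matrix.trace_neg, hBN]
  linarith

/-- A matrix that is self-adjoint for a positive definite form is zero as soon as its square has
trace zero, the trace being the sum of the squares of its (real) eigenvalues. -/
lemma eq_zero_of_trace_sq (H X : Matrix V V ℝ) (hH : H.PosDef) (hHX : H * X = Xᵀ * H)
    (htr : (X * X).trace = 0) : X = 0 := by
  have hunit : IsUnit H.det := (Matrix.isUnit_iff_isUnit_det H).1 hH.isUnit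
  obtain ⟨R, hR, hRR⟩ : ∃ R : Matrix V V ℝ, IsUnit R ∧ H = Rᵀ * R := by
    open scoped MatrixOrder in
    obtain ⟨R, hR, h⟩ := (CStarAlgebra.isStrictlyPositive_iff_eq_star_mul_self
      (a := H)).1 hH.isStrictlyPositive
    exact ⟨R, hR, by simpa [Matrix.star_eq_conjTranspose] using h⟩
  have hRu : IsUnit R.det := (Matrix.isUnit_iff_isUnit_det R).1 hR
  have hRtu : IsUnit Rᵀ.det := by rwa [Matrix.det_transpose]
  -- In the coordinates given by `R`, the matrix `X` becomes the symmetric matrix `Z`.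
  set Z := R * X * R⁻¹ with hZ
  have hZX : X = R⁻¹ * Z * R := by
    rw [hZ, Matrix.mul_assoc, Matrix.mul_assoc, Matrix.mul_assoc, Matrix.nonsing_inv_mul _ hRu,
      mul_one, Matrix.nonsing_inv_mul_cancel_left _ _ hRu]
  have hZt : Zᵀ = Z := by
    have h1 : Zᵀ = (Rᵀ)⁻¹ * (Xᵀ * H) * R⁻¹ := by
      rw [hZ, Matrix.transpose_mul, Matrix.transpose_mul, Matrix.transpose_nonsing_inv, hRR]
      simp only [Matrix.mul_assoc, Matrix.mul_nonsing_inv _ hRu, mul_one]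
    rw [h1, ← hHX, hRR, hZ]
    simp only [Matrix.mul_assoc, Matrix.nonsing_inv_mul_cancel_left _ _ hRtu]
  have hZtr : (Zᵀ * Z).trace = 0 := by
    rw [hZt, ← htr, hZ]
    calc (R * X * R⁻¹ * (R * X * R⁻¹)).trace = (R * (X * X) * R⁻¹).trace := by
          simp only [Matrix.mul_assoc, Matrix.nonsing_inv_mul_cancel_left _ _ hRu]
      _ = _ := by
          rw [Matrix.trace_mul_comm, Matrix.nonsing_inv_mul_cancel_left _ _ hRu]
  have hZ0 : Z = 0 := by
    have := (Matrix.trace_conjTranspose_mul_self_eq_zero_iff (A := Z)).1 (by simpa using hZtr)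
    exact this
  rw [hZX, hZ0]; simp

end MatrixLemmas

/-! ### Cayley matrices -/

section CayleyLemmas

open scoped Pointwise

variable {G : Type*} [Group G] [DecidableEq G]

lemma cayR_transpose (S : Finset G) : (cayR S)ᵀ = cayR S⁻¹ := by
  ext x y
  simp [cayR, Finset.mem_inv']

variable [Fintype G]

lemma sum_cayR (S : Finset G) (x : G) : ∑ y, cayR S x y = S.card := by
  rw [← Equiv.sum_comp (Equiv.mulRight x)]
  simp [cayR]

lemma trace_cayR_mul (S U : Finset G) :
    (cayR S * cayR U).trace = Fintype.card G * ((S ∩ U⁻¹).card : ℝ) := by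
  have h : ∀ x, (cayR S * cayR U) x x = ((S ∩ U⁻¹).card : ℝ) := by
    intro x
    rw [← sum_cayR _ x, Matrix.mul_apply]
    refine Finset.sum_congr rfl fun y _ => ?_
    simp [cayR, Finset.mem_inv', ← ite_and, and_comm]
  simp [Matrix.trace, h]

/-- Conjugation-closed sets are central in the group algebra. -/
lemma cayR_comm (S U : Finset G) (hU : ∀ g s : G, s ∈ U → g * s * g⁻¹ ∈ U) :
    cayR U * cayR S = cayR S * cayR U := by
  have hU' : ∀ g s : G, g * s * g⁻¹ ∈ U ↔ s ∈ U := by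
    refine fun g s => ⟨fun h => ?_, hU g s⟩
    have := hU g⁻¹ _ h
    simpa [mul_assoc] using this
  ext x z
  rw [Matrix.mul_apply, Matrix.mul_apply]
  -- A path with steps `u, s` is exchanged for the path with steps `s, s u s⁻¹`.
  refine Fintype.sum_equiv ((Equiv.inv G).trans ((Equiv.mulLeft z).trans (Equiv.mulRight x)))
    _ _ fun y => ?_
  have h : z * (z * y⁻¹ * x)⁻¹ = z * y⁻¹ * (y * x⁻¹) * (z * y⁻¹)⁻¹ := by group
  simp only [cayR, Matrix.of_apply, Equiv.trans_apply, Equiv.inv_apply, Equiv.coe_mulLeft,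
    Equiv.coe_mulRight, h, hU', mul_inv_cancel_right]
  exact mul_comm _ _

end CayleyLemmas

/-! ### Parameter arithmetic and the Cayley graph -/

/-- The case `δ ≤ 0` forces `2k = (n - 1)(μ - λ)`; together with the count of
walks of length two this makes `k` a divisor of `t`. -/
lemma dvd_of_two_mul_eq (n k μ lam t : ℤ) (hk : 0 < k) (hkn : k ≤ n - 1)
    (h : 2 * k = (n - 1) * (μ - lam)) (hw : k * k = t + lam * k + μ * (n - 1 - k)) : k ∣ t := by
  have h1 : 0 < μ - lam := by
    by_contra hc
    nlinarith
  have h2 : μ - lam ≤ 2 := by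
    by_contra hc
    nlinarith
  obtain hd | hd : μ - lam = 1 ∨ μ - lam = 2 := by omega
  · rw [hd] at h
    exact ⟨k - lam - μ, by linear_combination -hw + μ * h⟩
  · obtain rfl : n = k + 1 := by rw [hd] at h; linarith
    exact ⟨k - lam, by linear_combination -hw⟩

/-- Let `S = C ∪ T ⊆ G \ {e}` where `C` is a union of conjugacy classes of `G`
and `T` is a nonempty antisymmetric subset with `C ∩ T = ∅`.  Then the Cayley
graph `C(G, S)` is not a DSRG with parameters `(n, k, μ, λ, t)`, `0 < t < k`. -/
theorem cayley_class_union_antisym_not_dsrg {G : Type*} [Group G] [Fintype G]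
    [DecidableEq G] (C T : Finset G)
    (hC1 : (1 : G) ∉ C) (hT1 : (1 : G) ∉ T)
    (hconj : ∀ g s : G, s ∈ C → g * s * g⁻¹ ∈ C)
    (hTne : T.Nonempty)
    (hTanti : ∀ g ∈ T, g⁻¹ ∉ T)
    (hCT : Disjoint C T)
    (n k μ lam t : ℤ) (ht : 0 < t) (htk : t < k) :
    ¬ IsDSRG (cayleyAdj G (C ∪ T)) n k μ lam t := by
  open scoped Pointwise in
  rintro ⟨hn, -, hdiag, hAJ, hJA, hAA⟩
  set S := C ∪ T with hS
  set A : Matrix G G ℝ := cayR S with hA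
  set J : Matrix G G ℝ := onesR G with hJ
  have hn0 : (Fintype.card G : ℝ) ≠ 0 := by simp
  have hnR : (Fintype.card G : ℝ) = n := by exact_mod_cast hn
  -- Transfer of the defining identities from `ℤ` to `ℝ`.
  have hAmap : (cayleyAdj G S).map (Int.castRingHom ℝ) = A := by
    ext x y; simp [cayleyAdj, hA, cayR]
  have hJmap : (allOnes G).map (Int.castRingHom ℝ) = J := by
    ext x y; simp [allOnes, hJ, onesR]
  have hAJ' : A * J = (k : ℝ) • J := by
    have := congrArg (fun M => M.map (Int.castRingHom ℝ)) hAJ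
    simp only [Matrix.map_mul, hAmap, hJmap] at this
    rw [this, ← hJmap]; ext; simp [-zsmul_eq_mul, Matrix.smul_apply]
  have hJA' : J * A = (k : ℝ) • J := by
    have := congrArg (fun M => M.map (Int.castRingHom ℝ)) hJA
    simp only [Matrix.map_mul, hAmap, hJmap] at this
    rw [this, ← hJmap]; ext; simp [-zsmul_eq_mul, Matrix.smul_apply]
  have hAA' : A * A = (t : ℝ) • (1 : Matrix G G ℝ) + (lam : ℝ) • A + (μ : ℝ) • (J - 1 - A) := by
    have := congrArg (fun M => M.map (Int.castRingHom ℝ)) hAA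
    simp only [Matrix.map_mul, hAmap] at this
    rw [this, ← hJmap, ← hAmap]
    ext i j
    by_cases h : i = j <;> simp [-zsmul_eq_mul, -zsmul_one,
      Matrix.smul_apply, h]
  have hAdiag : ∀ i, A i i = 0 := by
    intro i
    simp [hA, cayR, hS, hC1, hT1]
  have htrA : A.trace = 0 := by simp [Matrix.trace, hAdiag]
  have hJJ : J * J = (n : ℝ) • J := by
    ext i j; simp [hJ, onesR, Matrix.mul_apply, hnR]
  have htrJ : J.trace = n := by simp [hJ, onesR, Matrix.trace, hnR]
  have htr1 : (1 : Matrix G G ℝ).trace = n := by rw [Matrix.trace_one, hnR]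
  -- `k` and `t` count elements of `S`.
  have hkS : k = S.card := by
    have h := congrFun (congrFun hAJ' 1) 1
    have h2 : (A * J) 1 1 = S.card := by
      rw [← sum_cayR S 1, Matrix.mul_apply]; simp [hJ, hA, onesR]
    rw [h2] at h
    simp [hJ, onesR] at h
    exact_mod_cast h.symm
  have htS : t = (S ∩ S⁻¹).card := by
    have h := trace_cayR_mul S S
    rw [← hA, hAA'] at h
    simp only [Matrix.trace_add, Matrix.trace_sub, Matrix.trace_smul, htrA, htrJ, htr1,
      smul_eq_mul, hnR, mul_zero, sub_self, add_zero] at h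
    rw [hnR] at hn0
    have := mul_left_cancel₀ hn0 ((mul_comm _ _).trans h)
    exact_mod_cast this
  have hkn : k ≤ n - 1 := by
    have h1 : S ⊆ Finset.univ.erase (1 : G) := by
      intro x hx
      refine Finset.mem_erase.2 ⟨?_, Finset.mem_univ _⟩
      rintro rfl
      simp [hS, hC1, hT1] at hx
    have h2 := Finset.card_le_card h1
    rw [Finset.card_erase_of_mem (Finset.mem_univ _), Finset.card_univ] at h2
    have := Fintype.card_pos (α := G)
    omega
  -- Row sums of `A²`.
  have hwR : (k : ℝ) * k = t + lam * k + μ * (n - 1 - k) := by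
    have h := congrArg (fun M => M * J) hAA'
    simp only [Matrix.mul_assoc, add_mul, sub_mul, Matrix.smul_mul, hAJ', Matrix.mul_smul,
      one_mul, hJJ] at h
    have := congrFun (congrFun h 1) 1
    simpa [hJ, onesR] using this
  have hw : k * k = t + lam * k + μ * (n - 1 - k) := by exact_mod_cast hwR
  -- Completing the square.
  set σ : ℝ := ((lam : ℝ) - μ) / 2 with hσ
  set δ : ℝ := t - μ + σ ^ 2 with hδ
  set b : ℝ := k - σ with hb
  set B : Matrix G G ℝ := A - σ • 1 with hB
  have hBB : B * B = δ • (1 : Matrix G G ℝ) + (μ : ℝ) • J := by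
    rw [hB, sub_mul, mul_sub, mul_sub, hAA']
    simp only [Matrix.smul_mul, Matrix.mul_smul, one_mul, mul_one]
    rw [hδ, hσ]
    module
  have hBJ : B * J = b • J := by
    rw [hB, sub_mul, hAJ', hb, sub_smul]; simp
  have hJB : J * B = b • J := by
    rw [hB, mul_sub, hJA', hb, sub_smul]; simp
  have hδpos : 0 < δ := by
    by_contra hc
    have htr := trace_eq_of_nonpos B δ μ b (not_lt.1 hc) hBB hBJ hJB (by
      rw [hnR, hδ, hb, hσ]; linear_combination hwR)
    rw [hB, Matrix.trace_sub, Matrix.trace_smul, htrA, htr1, hb, smul_eq_mul, hσ] at htr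
    have h2k : (2 : ℝ) * k = (n - 1) * (μ - lam) := by linear_combination (-2) * htr
    have := dvd_of_two_mul_eq n k μ lam t (ht.trans htk) hkn (by exact_mod_cast h2k) hw
    exact absurd (Int.le_of_dvd ht this) (not_le.2 htk)
  obtain ⟨H, hH, hHB, hHc⟩ := exists_form B δ μ b hδpos hBB hJB
  have hBt : Bᵀ = cayR S⁻¹ - σ • 1 := by
    rw [hB, Matrix.transpose_sub, hA, cayR_transpose]; simp
  have hcomm : ∀ U : Finset G, (∀ g s : G, s ∈ U → g * s * g⁻¹ ∈ U) →
      cayR U * B = B * cayR U ∧ cayR U * H = H * cayR U := by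
    intro U hU
    have h1 : cayR U * B = B * cayR U := by
      rw [hB, mul_sub, sub_mul, hA, cayR_comm S U hU]; simp
    refine ⟨h1, hHc _ h1 ?_⟩
    rw [hBt, mul_sub, sub_mul, cayR_comm S⁻¹ U hU]; simp
  have hconj' : ∀ g s : G, s ∈ C⁻¹ → g * s * g⁻¹ ∈ C⁻¹ := by
    intro g s hs
    rw [Finset.mem_inv'] at hs ⊢
    simpa [mul_assoc] using hconj g _ hs
  -- The trace of `A (A_C - A_{C⁻¹})` vanishes, so `C⁻¹ ⊆ S`.
  have hCinv : C⁻¹ ⊆ S := by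
    have hN := trace_mul_skew H B (cayR C - cayR C⁻¹) hH hHB
      (by rw [sub_mul, mul_sub, (hcomm C hconj).2, (hcomm _ hconj').2])
      (by rw [sub_mul, mul_sub B, (hcomm C hconj).1, (hcomm _ hconj').1])
      (by simp [Matrix.transpose_sub, cayR_transpose])
    have htrC : (cayR C).trace = (cayR C⁻¹).trace := by
      rw [← cayR_transpose, Matrix.trace_transpose]
    rw [hB, sub_mul, Matrix.trace_sub, Matrix.smul_mul, one_mul, Matrix.trace_smul,
      Matrix.trace_sub, htrC, sub_self, smul_zero, sub_zero, mul_sub, Matrix.trace_sub, hA,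
      trace_cayR_mul, trace_cayR_mul, inv_inv, sub_eq_zero] at hN
    have hcard : (S ∩ C⁻¹).card = (S ∩ C).card := by exact_mod_cast mul_left_cancel₀ hn0 hN
    have hSC : S ∩ C = C := Finset.inter_eq_right.2 Finset.subset_union_left
    have : S ∩ C⁻¹ = C⁻¹ :=
      Finset.eq_of_subset_of_card_le Finset.inter_subset_right (by
        rw [hcard, hSC, Finset.card_inv])
    exact Finset.inter_eq_right.1 this
  set U := C ∪ C⁻¹ with hU
  have hUS : U ⊆ S := Finset.union_subset Finset.subset_union_left hCinv
  have hUinv : U⁻¹ = U := by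
    ext x; simp [hU, Finset.mem_inv', or_comm]
  have hUconj : ∀ g s : G, s ∈ U → g * s * g⁻¹ ∈ U := by
    intro g s hs
    rcases Finset.mem_union.1 hs with h | h
    · exact Finset.mem_union_left _ (hconj g s h)
    · exact Finset.mem_union_right _ (hconj' g s h)
  have hX : cayR (S \ U) = B + σ • 1 - cayR U := by
    rw [hB, sub_add_cancel]
    ext x y
    by_cases h1 : y * x⁻¹ ∈ U
    · simp [hA, cayR, h1, hUS h1]
    · simp [hA, cayR, h1]
  have hX0 : cayR (S \ U) = 0 := by
    apply eq_zero_of_trace_sq H _ hH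
    · rw [hX, mul_sub, mul_add, hHB, ← (hcomm U hUconj).2]
      simp only [Matrix.transpose_sub, Matrix.transpose_add, Matrix.transpose_smul,
        Matrix.transpose_one, cayR_transpose, hUinv, sub_mul, add_mul, Matrix.smul_mul,
        Matrix.mul_smul, one_mul, mul_one]
    · rw [trace_cayR_mul]
      have : (S \ U) ∩ (S \ U)⁻¹ = ∅ := by
        have hsub : ∀ x ∈ S \ U, x ∈ T := by
          intro x hx
          simp only [hS, hU, Finset.mem_sdiff, Finset.mem_union] at hx
          tauto
        refine Finset.eq_empty_of_forall_notMem fun x hx => ?_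
        rw [Finset.mem_inter, Finset.mem_inv'] at hx
        exact hTanti x (hsub _ hx.1) (hsub _ hx.2)
      simp [this]
  have hSU : S = U := by
    refine Finset.Subset.antisymm (fun x hx => ?_) hUS
    by_contra hxU
    have := congrFun (congrFun hX0 1) x
    simp [cayR, hx, hxU] at this
  rw [hSU, hUinv, Finset.inter_self, ← hSU, ← hkS] at htS
  exact htk.ne htS
end

section
/- Let N and H be finite groups with |N| = m and |H| = d, let θ : H → Aut(N) be a homomorphism, and form the semidirect product G = N ⋊_θ H. Let N₁ ⊆ N \ {e_N} and let S = {(s, h) : s ∈ N₁, h ∈ H} ⊆ G. Let L be the adjacency matrix of the Cayley graph C(G, S), and let K be the N × N integer matrix with K(x, y) = #{(s, h) ∈ N₁ × H : θ(h)(s) = y·x⁻¹}. Then the characteristic polynomial of L equals X^{md − m} times the characteristic polynomial of K. -/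
/-!
For `x = (n, k) ∈ N ⋊[θ] H` put `u x = θ(k⁻¹)(n)`, so that `x = (1, k) · (u x, 1)`. Then
`(y x⁻¹).left = θ(y.right)(u y · (u x)⁻¹)`, hence the row of `x` in the adjacency matrix `L` depends
only on `u x ∈ N`. This factors `L` as `A * B` through `ℤ^N`, where `A` is the incidence matrix
of `u` (`twistIncidence`) and `B n y = [θ(y.right)(u y · n⁻¹) ∈ N₁]` (`twistRow`). The opposite
product `B * A` is `K`, because `u` together with the second coordinate identifies
`N ⋊[θ] H` with `N × H`. The claim follows from `Matrix.charpoly_mul_comm_of_le`, which compares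
the characteristic polynomials of `A * B` and `B * A` for rectangular matrices.
-/

open Matrix Polynomial

/-- The natural equivalence between `N ⋊[θ] H` and `N × H`. -/
def sdpEquivProd {N H : Type*} [Group N] [Group H] (θ : H →* MulAut N) :
    (N ⋊[θ] H) ≃ N × H where
  toFun g := (g.left, g.right)
  invFun p := ⟨p.1, p.2⟩
  left_inv _ := rfl
  right_inv _ := rfl

instance sdpFintype {N H : Type*} [Group N] [Group H] [Fintype N] [Fintype H]
    (θ : H →* MulAut N) : Fintype (N ⋊[θ] H) :=
  Fintype.ofEquiv (N × H) (sdpEquivProd θ).symm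

/-- The `N`-coordinate of `x` when the factor from `H` is written first:
`x = (1, x.right) * (twist θ x, 1)`. -/
def twist {N H : Type*} [Group N] [Group H] (θ : H →* MulAut N) (x : N ⋊[θ] H) : N :=
  θ x.right⁻¹ x.left

/-- The incidence matrix of the map `twist θ`. -/
def twistIncidence {N H : Type*} [Group N] [Group H] [DecidableEq N] (θ : H →* MulAut N) :
    Matrix (N ⋊[θ] H) N ℤ :=
  Matrix.of fun x n => if twist θ x = n then 1 else 0

/-- The rows of the adjacency matrix of `C(N ⋊[θ] H, N₁ × H)`, indexed by the value of `twist θ`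
at the source vertex. -/
def twistRow {N H : Type*} [Group N] [Group H] [DecidableEq N] (θ : H →* MulAut N)
    (N₁ : Finset N) : Matrix N (N ⋊[θ] H) ℤ :=
  Matrix.of fun n y => if θ y.right (twist θ y * n⁻¹) ∈ N₁ then 1 else 0

lemma mul_inv_left_eq_twist {N H : Type*} [Group N] [Group H] (θ : H →* MulAut N)
    (x y : N ⋊[θ] H) : (y * x⁻¹).left = θ y.right (twist θ y * (twist θ x)⁻¹) := by
  simp [twist]

lemma cayleyAdj_eq_mul {N H : Type*} [Group N] [Group H]
    [Fintype N] [Fintype H] [DecidableEq N] [DecidableEq H]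
    (θ : H →* MulAut N) (N₁ : Finset N) :
    cayleyAdj (N ⋊[θ] H) (Finset.univ.filter fun g => g.left ∈ N₁) =
      twistIncidence θ * twistRow θ N₁ := by
  ext x y
  simp only [cayleyAdj, twistIncidence, twistRow, Matrix.mul_apply, Matrix.of_apply,
    Finset.mem_filter, Finset.mem_univ, true_and, mul_inv_left_eq_twist, ite_mul, one_mul,
    zero_mul, Finset.sum_ite_eq, if_true]

/-- `N ⋊[θ] H ≃ N × H`, with `twist θ` as first coordinate. -/
def twistEquiv {N H : Type*} [Group N] [Group H] (θ : H →* MulAut N) :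
    (N ⋊[θ] H) ≃ N × H where
  toFun x := (twist θ x, x.right)
  invFun p := ⟨θ p.2 p.1, p.2⟩
  left_inv x := by ext <;> simp [twist]
  right_inv p := by ext <;> simp [twist]

lemma twistRow_mul_twistIncidence {N H : Type*} [Group N] [Group H]
    [Fintype N] [Fintype H] [DecidableEq N]
    (θ : H →* MulAut N) (N₁ : Finset N) :
    twistRow θ N₁ * twistIncidence θ =
      Matrix.of fun x y : N =>
        ((((N₁ ×ˢ (Finset.univ : Finset H)).filter
          fun p => θ p.2 p.1 = y * x⁻¹).card : ℤ)) := by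
  ext n n'
  have h1 : (twistRow θ N₁ * twistIncidence θ) n n' =
      ∑ p : N × H, (if θ p.2 (p.1 * n⁻¹) ∈ N₁ then (1 : ℤ) else 0) *
        (if p.1 = n' then 1 else 0) := by
    rw [Matrix.mul_apply]
    exact Fintype.sum_equiv (twistEquiv θ) _ _ fun _ => rfl
  rw [h1, Fintype.sum_prod_type_right]
  simp only [mul_ite, mul_one, mul_zero, Finset.sum_ite_eq', Finset.mem_univ, if_true,
    Matrix.of_apply]
  rw [Finset.sum_boole]
  norm_cast
  -- `θ k (n' n⁻¹) = s` is the equation `θ k⁻¹ s = n' n⁻¹`, so `k` corresponds to `h = k⁻¹`.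
  refine Finset.card_bij' (fun k _ => (θ k (n' * n⁻¹), k⁻¹)) (fun p _ => p.2⁻¹) ?_ ?_ ?_ ?_
  · intro k hk
    simpa using hk
  · rintro ⟨s, h⟩ hp
    simp only [Finset.mem_filter, Finset.mem_product, Finset.mem_univ, and_true] at hp
    simp only [Finset.mem_filter, Finset.mem_univ, true_and]
    rw [← hp.2]
    simpa using hp.1
  · intro k _
    simp
  · rintro ⟨s, h⟩ hp
    simp only [Finset.mem_filter, Finset.mem_product, Finset.mem_univ, and_true] at hp
    rw [← hp.2]
    simp

/-- Let `G = N ⋊_θ H` with `|N| = m`, `|H| = d`, let `N₁ ⊆ N \ {e}` and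
`S = N₁ × H ⊆ G`.  Let `L` be the adjacency matrix of `C(G, S)` and `K` the
`N × N` matrix with `K x y = #{(s, h) ∈ N₁ × H : θ(h)(s) = y·x⁻¹}`.  Then the
characteristic polynomial of `L` is `X^(md − m)` times that of `K`. -/
theorem sdp_cayley_charpoly {N H : Type*} [Group N] [Group H]
    [Fintype N] [Fintype H] [DecidableEq N] [DecidableEq H]
    (θ : H →* MulAut N) (N₁ : Finset N) (hN₁ : (1 : N) ∉ N₁)
    (m d : ℕ) (hm : Fintype.card N = m) (hd : Fintype.card H = d) :
    (cayleyAdj (N ⋊[θ] H) (Finset.univ.filter fun g => g.left ∈ N₁)).charpoly =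
      X ^ (m * d - m) *
        (Matrix.of fun x y : N =>
          ((((N₁ ×ˢ (Finset.univ : Finset H)).filter
            fun p => θ p.2 p.1 = y * x⁻¹).card : ℤ))).charpoly := by
  subst hm hd
  have hcard : Fintype.card (N ⋊[θ] H) = Fintype.card N * Fintype.card H := by
    rw [Fintype.card_congr (sdpEquivProd θ), Fintype.card_prod]
  rw [cayleyAdj_eq_mul, ← twistRow_mul_twistIncidence, ← hcard]
  refine Matrix.charpoly_mul_comm_of_le _ _ ?_
  rw [hcard]
  exact Nat.le_mul_of_pos_right _ Fintype.card_pos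
end

section
/- Let N and H be finite groups with |N| = m and |H| = d, let θ : H → Aut(N) be a homomorphism, and form the semidirect product G = N ⋊_θ H. Let N₁ ⊆ N \ {e_N} and S = {(s, h) : s ∈ N₁, h ∈ H} ⊆ G. Let L be the adjacency matrix of the Cayley graph C(G, S), regarded over ℚ, and let K be the N × N rational matrix with K(x, y) = #{(s, h) ∈ N₁ × H : θ(h)(s) = y·x⁻¹}. Then the minimal polynomial of K divides the minimal polynomial of L, and the minimal polynomial of L divides X times the minimal polynomial of K. -/
/-!
Write `L` and `K` for the two matrices. For `x = (n, h)` and `y = (n', h')` in `G = N ⋊[θ] H`,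
the element `y * x⁻¹` lies in `S` if and only if `n' * θ(h')(a)⁻¹ ∈ N₁`, where
`a = θ(h⁻¹)(n)`. So the rows of `L` depend only on `a`, which gives a factorization `L = A * B`
through `N` (`sdpLeft_mul_sdpRight`), with `A` the incidence matrix of `(n, h) ↦ θ(h⁻¹)(n)`.
Counting fibres shows that `B * A = K` (`sdpRight_mul_sdpLeft`).

Everything follows from `p(A * B) * A = A * p(B * A)` (`aeval_mul_intertwine`). Multiplying by `B`
on the right with `p = minpoly K` gives `minpoly L ∣ X * minpoly K`. Taking `p = minpoly L` gives
`A * p(K) = 0`, hence `p(K) = 0`, because the map defining `A` is onto `N`.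
-/

open Matrix Polynomial

/-- The adjacency matrix (over `ℚ`) of the Cayley graph `C(G, S)`. -/
def cayleyAdjQ (G : Type*) [Group G] [Fintype G] [DecidableEq G] (S : Finset G) :
    Matrix G G ℚ :=
  Matrix.of fun x y => if y * x⁻¹ ∈ S then (1 : ℚ) else 0

/-- `g = (n, h) ↦ θ(h⁻¹)(n)`; this is the `N`-component of `g` when `g` is written as a
product `h * n` instead of `n * h`. -/
def sdpProj {N H : Type*} [Group N] [Group H] (θ : H →* MulAut N) (g : N ⋊[θ] H) : N :=
  θ g.right⁻¹ g.left

/-- The incidence matrix of the map `sdpProj θ : G → N`. -/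
def sdpLeft {N H : Type*} [Group N] [Group H] [DecidableEq N] (θ : H →* MulAut N) :
    Matrix (N ⋊[θ] H) N ℚ :=
  Matrix.of fun g a => if sdpProj θ g = a then 1 else 0

/-- The `N × G` matrix formed by the rows of the Cayley adjacency matrix of `C(G, S)`
indexed by `N ⊆ G`. -/
def sdpRight {N H : Type*} [Group N] [Group H] [DecidableEq N] (θ : H →* MulAut N)
    (N₁ : Finset N) : Matrix N (N ⋊[θ] H) ℚ :=
  Matrix.of fun a g => if g.left * (θ g.right a)⁻¹ ∈ N₁ then 1 else 0

lemma aeval_mul_intertwine {m n : Type*} [Fintype m] [Fintype n] [DecidableEq m]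
    [DecidableEq n] (A : Matrix m n ℚ) (B : Matrix n m ℚ) (p : ℚ[X]) :
    aeval (A * B) p * A = A * aeval (B * A) p := by
  induction p using Polynomial.induction_on' with
  | add p q hp hq => simp only [map_add, Matrix.add_mul, Matrix.mul_add, hp, hq]
  | monomial k c =>
    have key : (A * B) ^ k * A = A * (B * A) ^ k := by
      induction k with
      | zero => simp
      | succ k ih =>
        rw [pow_succ, pow_succ', Matrix.mul_assoc, Matrix.mul_assoc A B A, ← Matrix.mul_assoc,
          ih, Matrix.mul_assoc, ← pow_succ, ← pow_succ']
    simp only [aeval_monomial, Algebra.algebraMap_eq_smul_one, smul_mul_assoc, one_mul,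
      Matrix.smul_mul, Matrix.mul_smul, key]

lemma minpoly_mul_dvd_X_mul {m n : Type*} [Fintype m] [Fintype n] [DecidableEq m]
    [DecidableEq n] (A : Matrix m n ℚ) (B : Matrix n m ℚ) :
    minpoly ℚ (A * B) ∣ X * minpoly ℚ (B * A) := by
  apply minpoly.dvd
  rw [mul_comm X, map_mul, aeval_X, ← Matrix.mul_assoc, aeval_mul_intertwine, minpoly.aeval]
  simp

lemma minpoly_mul_dvd_of_injective {m n : Type*} [Fintype m] [Fintype n] [DecidableEq m]
    [DecidableEq n] (A : Matrix m n ℚ) (B : Matrix n m ℚ)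
    (hA : ∀ M : Matrix n n ℚ, A * M = 0 → M = 0) :
    minpoly ℚ (B * A) ∣ minpoly ℚ (A * B) := by
  apply minpoly.dvd
  apply hA
  rw [← aeval_mul_intertwine, minpoly.aeval, Matrix.zero_mul]

section

variable {N H : Type*} [Group N] [Group H] [Fintype N] [DecidableEq N]
  (θ : H →* MulAut N) (N₁ : Finset N)

/-- The value of `sdpLeft θ * M` at `((a, 1), b)` is `M a b`. -/
lemma sdpLeft_injective (M : Matrix N N ℚ) (h : sdpLeft θ * M = 0) : M = 0 := by
  ext a b
  have := congrFun (congrFun h ⟨a, 1⟩) b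
  simpa only [sdpLeft, sdpProj, Matrix.mul_apply, Matrix.of_apply, inv_one, map_one,
    MulAut.one_apply, ite_mul, one_mul, zero_mul, Finset.sum_ite_eq, Finset.mem_univ, if_true,
    Matrix.zero_apply] using this

/-- `L (x, y)` depends on `x` only through `sdpProj θ x`. -/
lemma sdpLeft_mul_sdpRight [Fintype H] [DecidableEq H] : sdpLeft θ * sdpRight θ N₁ =
    cayleyAdjQ (N ⋊[θ] H) (Finset.univ.filter fun g => g.left ∈ N₁) := by
  ext x y
  rw [Matrix.mul_apply, Finset.sum_eq_single (sdpProj θ x)]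
  · simp [sdpLeft, sdpRight, sdpProj, cayleyAdjQ]
  · intro a _ ha
    simp [sdpLeft, ha.symm]
  · simp

lemma sdpRight_mul_sdpLeft [Fintype H] : sdpRight θ N₁ * sdpLeft θ =
    Matrix.of fun x y : N => ((((N₁ ×ˢ (Finset.univ : Finset H)).filter
          fun p => θ p.2 p.1 = y * x⁻¹).card : ℚ)) := by
  ext a b
  simp only [sdpLeft, sdpRight, Matrix.mul_apply, Matrix.of_apply, ← ite_and, mul_ite, mul_one,
    mul_zero, Finset.sum_boole, Nat.cast_inj]
  -- The fibre of `sdpProj θ` over `b` is parametrised by `h`; the inverse on `h` turns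
  -- `θ(h)(b * a⁻¹) ∈ N₁` into `b * a⁻¹ ∈ θ(h)(N₁)`.
  refine Finset.card_nbij' (fun g => (g.left * (θ g.right a)⁻¹, g.right⁻¹))
    (fun p => ⟨p.1 * θ p.2⁻¹ a, p.2⁻¹⟩) ?_ ?_ ?_ ?_
  · rintro g hg
    simp [sdpProj] at hg ⊢
    simp [hg]
  · rintro p hp
    simp [sdpProj] at hp ⊢
    simp [hp]
  · rintro g -
    simp
  · rintro p -
    simp

end

/-- Let `G = N ⋊_θ H`, `N₁ ⊆ N \ {e}` and `S = N₁ × H ⊆ G`.  Let `L` be the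
adjacency matrix of `C(G, S)` over `ℚ` and `K` the `N × N` rational matrix with
`K x y = #{(s, h) ∈ N₁ × H : θ(h)(s) = y·x⁻¹}`.  Then `minpoly K ∣ minpoly L`
and `minpoly L ∣ X · minpoly K`. -/
theorem sdp_cayley_minpoly {N H : Type*} [Group N] [Group H]
    [Fintype N] [Fintype H] [DecidableEq N] [DecidableEq H]
    (θ : H →* MulAut N) (N₁ : Finset N) (hN₁ : (1 : N) ∉ N₁)
    (m d : ℕ) (hm : Fintype.card N = m) (hd : Fintype.card H = d) :
    minpoly ℚ (Matrix.of fun x y : N =>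
        ((((N₁ ×ˢ (Finset.univ : Finset H)).filter
          fun p => θ p.2 p.1 = y * x⁻¹).card : ℚ))) ∣
      minpoly ℚ (cayleyAdjQ (N ⋊[θ] H) (Finset.univ.filter fun g => g.left ∈ N₁)) ∧
    minpoly ℚ (cayleyAdjQ (N ⋊[θ] H) (Finset.univ.filter fun g => g.left ∈ N₁)) ∣
      X * minpoly ℚ (Matrix.of fun x y : N =>
        ((((N₁ ×ˢ (Finset.univ : Finset H)).filter
          fun p => θ p.2 p.1 = y * x⁻¹).card : ℚ))) := by
  rw [← sdpLeft_mul_sdpRight, ← sdpRight_mul_sdpLeft]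
  exact ⟨minpoly_mul_dvd_of_injective _ _ (sdpLeft_injective θ), minpoly_mul_dvd_X_mul _ _⟩
end

section
/- Let N and H be finite groups with |N| = m and |H| = d, let θ : H → Aut(N) be a homomorphism, G = N ⋊_θ H, N₁ ⊆ N \ {e_N}, and S = {(s, h) : s ∈ N₁, h ∈ H}. Suppose there exist integers x₁, x₂ with 0 < x₁ < d and x₂ < 0 such that in the group ring ℤ[N] one has ∑_{h∈H} ∑_{s∈N₁} θ(h)(s) = x₁·N̄ + x₂·e_N, where N̄ = ∑_{n∈N} n. Then the Cayley graph C(G, S) is a directed strongly regular graph with parameters (md, x₁m + x₂, x₁(x₁m + x₂)/d, x₂ + x₁(x₁m + x₂)/d, x₁(x₁m + x₂)/d). -/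
/-!
Write `w(g) = 1` if the `N`-component of `g` lies in `N₁` and `w(g) = 0` otherwise, so that the
adjacency matrix has entries `w(y x⁻¹)`. Comparing coefficients in the flatness hypothesis says
that each `p : N` satisfies `#{h | θ(h)⁻¹ p ∈ N₁} = x₁ + x₂·[p = 1]` (`flat_coeff`); summing over `p`
gives `|N₁|·d = x₁m + x₂` (`card_mul_eq`), hence the degree, and shows that the integer division
by `d` in the parameters is exact, with value `x₁|N₁|`.

The `(x, z)` entry of `A²` counts the `b` with `b` and `b⁻¹(z x⁻¹)` both in the connection set. For
`b = (n, h)` and `z x⁻¹ = (p, q)`, the `N`-component of `b⁻¹(z x⁻¹)` is `θ(h)⁻¹(n⁻¹p)`, so the number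
of admissible `h` for fixed `n ∈ N₁` is `x₁ + x₂·[n = p]`. Summing over `n ∈ N₁` yields
`A² = x₁|N₁|·J + x₂·A`, which is the required identity because `t = μ` and `λ = x₂ + μ`.
-/


open Matrix

lemma inv_mul_left {N H : Type*} [Group N] [Group H] (θ : H →* MulAut N)
    (n : N) (h : H) (g : N ⋊[θ] H) :
    ((⟨n, h⟩ : N ⋊[θ] H)⁻¹ * g).left = (θ h)⁻¹ (n⁻¹ * g.left) := by
  simp

section Flat

variable {N H : Type*} [Group N] [Group H] [Fintype N] [Fintype H] [DecidableEq N]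

/-- The flatness hypothesis read off coefficientwise at `p`. -/
lemma flat_coeff (θ : H →* MulAut N) (N₁ : Finset N) (x₁ x₂ : ℤ)
    (hflat : (∑ h : H, ∑ s ∈ N₁, MonoidAlgebra.of ℤ N (θ h s)) =
      x₁ • (∑ g : N, MonoidAlgebra.of ℤ N g) + x₂ • (1 : MonoidAlgebra ℤ N)) (p : N) :
    (∑ h : H, if (θ h)⁻¹ p ∈ N₁ then (1 : ℤ) else 0) = x₁ + if p = 1 then x₂ else 0 := by
  have hc := congrArg (fun f : MonoidAlgebra ℤ N => f.coeff p) hflat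
  have hs : ∀ (h : H) (s : N), (θ h s = p) ↔ (s = (θ h)⁻¹ p) := fun h s => by
    rw [MulAut.inv_def, MulEquiv.eq_symm_apply]
  simpa [-zsmul_eq_mul, MonoidAlgebra.of_apply, MonoidAlgebra.one_def,
    Finsupp.single_apply, hs, eq_comm (a := (1 : N))] using hc

lemma card_mul_eq (θ : H →* MulAut N) (N₁ : Finset N) (x₁ x₂ : ℤ)
    (hc : ∀ p : N, (∑ h : H, if (θ h)⁻¹ p ∈ N₁ then (1 : ℤ) else 0) =
      x₁ + if p = 1 then x₂ else 0) :
    (N₁.card : ℤ) * Fintype.card H = x₁ * Fintype.card N + x₂ := by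
  have h1 := Finset.sum_congr (rfl : (Finset.univ : Finset N) = Finset.univ) fun p _ => hc p
  rw [Finset.sum_comm] at h1
  have h2 : ∀ h : H, (∑ p : N, if (θ h)⁻¹ p ∈ N₁ then (1 : ℤ) else 0) = N₁.card := fun h => by
    refine (Equiv.sum_comp ((θ h)⁻¹ : MulAut N).toEquiv
      (fun p => if p ∈ N₁ then (1 : ℤ) else 0)).trans ?_
    simp
  simp only [h2, Finset.sum_add_distrib] at h1
  simp at h1
  linarith

lemma sdp_sum (θ : H →* MulAut N) (f : N ⋊[θ] H → ℤ) :
    ∑ g, f g = ∑ n : N, ∑ h : H, f ⟨n, h⟩ := by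
  rw [← Fintype.sum_prod_type' (fun n h => f ⟨n, h⟩)]
  exact Fintype.sum_equiv (sdpEquivProd θ) _ _ fun _ => rfl

lemma sdp_sum_left (θ : H →* MulAut N) (N₁ : Finset N) :
    (∑ g : N ⋊[θ] H, if g.left ∈ N₁ then (1 : ℤ) else 0) = N₁.card * Fintype.card H := by
  rw [sdp_sum]
  have hn : ∀ n : N, (∑ _h : H, if n ∈ N₁ then (1 : ℤ) else 0) =
      if n ∈ N₁ then (Fintype.card H : ℤ) else 0 := fun n => by
    split_ifs <;> simp
  simp [hn]

/-- The number of factorizations `g = b a` with both factors in `N₁ × H`, namely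
`x₁|N₁| + x₂·[g ∈ N₁ × H]`. -/
lemma sum_factorizations (θ : H →* MulAut N) (N₁ : Finset N) (x₁ x₂ : ℤ)
    (hc : ∀ p : N, (∑ h : H, if (θ h)⁻¹ p ∈ N₁ then (1 : ℤ) else 0) =
      x₁ + if p = 1 then x₂ else 0) (g : N ⋊[θ] H) :
    (∑ b : N ⋊[θ] H, (if (b⁻¹ * g).left ∈ N₁ then (1 : ℤ) else 0) *
      (if b.left ∈ N₁ then (1 : ℤ) else 0)) =
      x₁ * N₁.card + x₂ * (if g.left ∈ N₁ then 1 else 0) := by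
  rw [sdp_sum]
  have hn : ∀ n : N, (∑ h : H, (if ((⟨n, h⟩ : N ⋊[θ] H)⁻¹ * g).left ∈ N₁ then (1 : ℤ) else 0) *
      (if n ∈ N₁ then (1 : ℤ) else 0)) =
      if n ∈ N₁ then x₁ + (if n = g.left then x₂ else 0) else 0 := fun n => by
    simp only [inv_mul_left]
    rw [← Finset.sum_mul, hc]
    simp [inv_mul_eq_one]
  rw [Finset.sum_congr rfl fun n _ => hn n]
  simp [Finset.sum_add_distrib, mul_comm]

end Flat

/-- Suppose `∑_{h ∈ H} ∑_{s ∈ N₁} θ(h)(s) = x₁·N̄ + x₂·e` in `ℤ[N]` for integers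
`0 < x₁ < d` and `x₂ < 0`.  Then `C(N ⋊_θ H, N₁ × H)` is a DSRG with parameters
`(md, x₁m + x₂, x₁(x₁m + x₂)/d, x₂ + x₁(x₁m + x₂)/d, x₁(x₁m + x₂)/d)`. -/
theorem sdp_cayley_dsrg_construction {N H : Type*} [Group N] [Group H]
    [Fintype N] [Fintype H] [DecidableEq N] [DecidableEq H]
    (θ : H →* MulAut N) (N₁ : Finset N) (hN₁ : (1 : N) ∉ N₁)
    (m d : ℕ) (hm : Fintype.card N = m) (hd : Fintype.card H = d)
    (x₁ x₂ : ℤ) (hx₁ : 0 < x₁) (hx₁d : x₁ < (d : ℤ)) (hx₂ : x₂ < 0)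
    (hflat : (∑ h : H, ∑ s ∈ N₁, MonoidAlgebra.of ℤ N (θ h s)) =
      x₁ • (∑ g : N, MonoidAlgebra.of ℤ N g) + x₂ • (1 : MonoidAlgebra ℤ N)) :
    IsDSRG (cayleyAdj (N ⋊[θ] H) (Finset.univ.filter fun g => g.left ∈ N₁))
      ((m : ℤ) * d) (x₁ * m + x₂)
      ((x₁ * (x₁ * m + x₂)) / d)
      (x₂ + (x₁ * (x₁ * m + x₂)) / d)
      ((x₁ * (x₁ * m + x₂)) / d) := by
  subst hm hd
  have hc := flat_coeff θ N₁ x₁ x₂ hflat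
  have hk := card_mul_eq θ N₁ x₁ x₂ hc
  have hd0 : (Fintype.card H : ℤ) ≠ 0 := by exact_mod_cast Fintype.card_ne_zero
  have hμ : x₁ * (x₁ * Fintype.card N + x₂) / (Fintype.card H : ℤ) = x₁ * N₁.card := by
    rw [← hk, ← mul_assoc, Int.mul_ediv_cancel _ hd0]
  rw [hμ, ← hk]
  refine ⟨?_, ?_, ?_, ?_, ?_, ?_⟩
  · rw [Fintype.card_congr (sdpEquivProd θ), Fintype.card_prod]
    push_cast
    rfl
  · intro i j
    simp only [cayleyAdj, Matrix.of_apply]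
    split_ifs <;> simp
  · intro i
    simp [cayleyAdj, hN₁]
  · ext x z
    simp only [cayleyAdj, allOnes, Matrix.mul_apply, Matrix.of_apply, Matrix.smul_apply,
      Finset.mem_filter, Finset.mem_univ, true_and, mul_one, smul_eq_mul]
    rw [← sdp_sum_left θ N₁]
    exact Equiv.sum_comp (Equiv.mulRight x⁻¹)
      (fun g : N ⋊[θ] H => if g.left ∈ N₁ then (1 : ℤ) else 0)
  · ext x z
    simp only [cayleyAdj, allOnes, Matrix.mul_apply, Matrix.of_apply, Matrix.smul_apply,
      Finset.mem_filter, Finset.mem_univ, true_and, mul_one, one_mul, smul_eq_mul]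
    rw [← sdp_sum_left θ N₁]
    exact Fintype.sum_equiv ((Equiv.inv _).trans (Equiv.mulLeft z)) _ _ fun _ => rfl
  · ext x z
    have hA : (cayleyAdj (N ⋊[θ] H) (Finset.univ.filter fun g => g.left ∈ N₁) *
        cayleyAdj (N ⋊[θ] H) (Finset.univ.filter fun g => g.left ∈ N₁)) x z =
        x₁ * N₁.card + x₂ * (if (z * x⁻¹).left ∈ N₁ then 1 else 0) := by
      rw [← sum_factorizations θ N₁ x₁ x₂ hc (z * x⁻¹), Matrix.mul_apply]
      -- Substitute `b = z y⁻¹`, so that `y x⁻¹ = b⁻¹ (z x⁻¹)`.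
      refine Fintype.sum_equiv ((Equiv.inv _).trans (Equiv.mulLeft z)) _ _ fun y => ?_
      have hy : (z * y⁻¹)⁻¹ * (z * x⁻¹) = y * x⁻¹ := by group
      simp only [cayleyAdj, Matrix.of_apply, Finset.mem_filter, Finset.mem_univ, true_and,
        Equiv.trans_apply, Equiv.inv_apply, Equiv.coe_mulLeft, hy]
    rw [hA]
    simp only [cayleyAdj, allOnes, Matrix.add_apply, Matrix.sub_apply, Matrix.smul_apply,
      Matrix.of_apply, Finset.mem_filter, Finset.mem_univ, true_and, smul_eq_mul]
    ring
end

section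
/- Let N be a finite group of order m and let β ∈ Aut(N) satisfy the q-orbit condition: every orbit of the cyclic group ⟨β⟩ on N \ {e_N} has exactly q elements. Let H be the cyclic group of order q with generator b, define θ : H → Aut(N) by θ(b^u) = β^u, and let O₁, …, O_s be the distinct orbits of ⟨β⟩ on N \ {e_N}. Let r be a positive integer with r < q, for each i choose a subset Õ_i ⊆ O_i with |Õ_i| = r, and set N₁ = ⋃_{i=1}^{s} Õ_i. Then the Cayley graph C(N ⋊_θ H, {(s, h) : s ∈ N₁, h ∈ H}) is a directed strongly regular graph with parameters (mq, (m−1)r, (m−1)r²/q, (m−1)r²/q − r, (m−1)r²/q). -/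
/-!
In the integral group ring of `G = N ⋊[θ] H`, identify a set with the sum of its elements, and let
`S = N₁ H`. Since `H N₁ = ∑ h, θ h (N₁) h`, one has `H N₁ H = (∑ h, θ h (N₁)) H`. The action of `H`
on each nontrivial orbit is regular and `N₁` meets the orbit in `r` points, so
`∑ h, θ h (N₁) = r (N - e)` (`sum_indicator_orbit`). Hence
`S² = r N₁ (N - e) H = r |N₁| G - r S`, which in coordinates is `sum_indicator_convolution`.
As `q |N₁| = (m - 1) r`, the coefficient `r |N₁|` is `(m - 1) r² / q`, an exact quotient, and
`A² = μ J - r A` is the defining identity with `t = μ` and `λ = μ - r`.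
-/

open Matrix

/-- A nontrivial point of `N` is moved into the set `N₁` by exactly `r` elements
of `H`, because `H` acts regularly on its orbit; the identity is never moved into `N₁`. -/
lemma sum_indicator_orbit {N H : Type*} [Group N] [Group H]
    [Fintype H] [DecidableEq N]
    (β : MulAut N) (q : ℕ)
    (hq2 : ∀ a : N, a ≠ 1 → ∀ u : ℕ, (β ^ u) a = a → q ∣ u)
    (b : H) (hb : ∀ h : H, h ∈ Subgroup.zpowers b) (hH : Fintype.card H = q)
    (θ : H →* MulAut N) (hθ : ∀ u : ℕ, θ (b ^ u) = β ^ u)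
    (r : ℕ) (N₁ : Finset N) (hN₁ : (1 : N) ∉ N₁)
    (horb : ∀ a : N, a ≠ 1 →
      ((((Finset.range q).image fun u => (β ^ u) a) ∩ N₁).card = r)) (p : N) :
    ∑ h : H, (if θ h p ∈ N₁ then (1 : ℤ) else 0) = if p = 1 then 0 else (r : ℤ) := by
  classical
  have hord : orderOf b = q := by
    rw [orderOf_eq_card_of_forall_mem_zpowers hb, Nat.card_eq_fintype_card, hH]
  have hpow : ∀ h : H, ∃ u < q, b ^ u = h := by
    intro h
    have := (mem_zpowers_iff_mem_range_orderOf (x := b) (y := h)).1 (hb h)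
    simpa [hord] using this
  split_ifs with hp
  · simp [hp, hN₁]
  · have himg : ((Finset.range q).image fun u => (β ^ u) p) =
        Finset.univ.image fun h : H => θ h p := by
      ext x
      simp only [Finset.mem_image, Finset.mem_range, Finset.mem_univ, true_and]
      constructor
      · rintro ⟨u, -, rfl⟩
        exact ⟨b ^ u, by rw [hθ]⟩
      · rintro ⟨h, rfl⟩
        obtain ⟨u, hu, rfl⟩ := hpow h
        exact ⟨u, hu, by rw [hθ]⟩
    have hinj : Function.Injective fun h : H => θ h p := by
      intro h k hk
      obtain ⟨u, -, hu⟩ := hpow (h⁻¹ * k)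
      have hfix : (β ^ u) p = p := by
        rw [← hθ, hu, map_mul, MulAut.mul_apply]
        simp only at hk
        rw [← hk, map_inv, MulAut.inv_apply_self]
      have : b ^ u = 1 := by
        rw [← orderOf_dvd_iff_pow_eq_one, hord]
        exact hq2 p hp u hfix
      rw [this] at hu
      exact (inv_mul_eq_one.1 hu.symm)
    rw [← horb p hp, himg, Finset.sum_boole]
    congr 1
    rw [← Finset.card_image_of_injective _ hinj]
    congr 1
    ext x
    simp only [Finset.mem_image, Finset.mem_filter, Finset.mem_univ, true_and, Finset.mem_inter]
    constructor
    · rintro ⟨h, hh, rfl⟩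
      exact ⟨⟨h, rfl⟩, hh⟩
    · rintro ⟨⟨h, rfl⟩, hh⟩
      exact ⟨h, hh, rfl⟩

lemma sum_semidirectProduct {N H : Type*} [Group N] [Group H] [Fintype N] [Fintype H]
    (θ : H →* MulAut N) (f : N ⋊[θ] H → ℤ) :
    ∑ g, f g = ∑ h : H, ∑ n : N, f ⟨n, h⟩ := by
  rw [Finset.sum_comm, ← Fintype.sum_prod_type']
  exact Fintype.sum_equiv (sdpEquivProd θ) _ _ fun _ => rfl

/-- The coefficient of `g` in `S² = r |N₁| G - r S`, where `S` is the set of elements of the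
semidirect product with left component in `N₁`. -/
lemma sum_indicator_convolution {N H : Type*} [Group N] [Group H]
    [Fintype N] [Fintype H] [DecidableEq N]
    (θ : H →* MulAut N) (r : ℕ) (N₁ : Finset N)
    (hc : ∀ p : N, ∑ h : H, (if θ h p ∈ N₁ then (1 : ℤ) else 0) = if p = 1 then 0 else (r : ℤ))
    (g : N ⋊[θ] H) :
    ∑ w : N ⋊[θ] H, (if w.left ∈ N₁ then (1 : ℤ) else 0) *
        (if (g * w⁻¹).left ∈ N₁ then (1 : ℤ) else 0) =
      r * N₁.card - r * (if g.left ∈ N₁ then (1 : ℤ) else 0) := by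
  rw [sum_semidirectProduct]
  have hleft : ∀ (n : N) (h : H),
      (g * (⟨n, h⟩ : N ⋊[θ] H)⁻¹).left = g.left * (θ (g.right * h⁻¹) n)⁻¹ := by
    intro n h
    simp
  simp only [hleft]
  calc
    _ = ∑ k : H, ∑ n : N, (if n ∈ N₁ then (1 : ℤ) else 0) *
          (if g.left * (θ k⁻¹ n)⁻¹ ∈ N₁ then (1 : ℤ) else 0) :=
        Fintype.sum_equiv (Equiv.mulRight g.right⁻¹) _ _ fun h => by simp
    _ = ∑ k : H, ∑ p : N, (if θ k p ∈ N₁ then (1 : ℤ) else 0) *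
          (if g.left * p⁻¹ ∈ N₁ then (1 : ℤ) else 0) := by
        refine Finset.sum_congr rfl fun k _ => ?_
        refine Fintype.sum_equiv (θ k⁻¹).toEquiv _ _ fun n => ?_
        simp
    _ = ∑ p : N, (if p = 1 then 0 else (r : ℤ)) *
          (if g.left * p⁻¹ ∈ N₁ then (1 : ℤ) else 0) := by
        rw [Finset.sum_comm]
        simp only [← Finset.sum_mul, hc]
    _ = ∑ p : N, ((r : ℤ) * (if g.left * p⁻¹ ∈ N₁ then (1 : ℤ) else 0) -
          if p = 1 then (r : ℤ) * (if g.left ∈ N₁ then (1 : ℤ) else 0) else 0) := by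
        refine Finset.sum_congr rfl fun p _ => ?_
        by_cases hp : p = 1 <;> simp [hp]
    _ = _ := by
        rw [Finset.sum_sub_distrib, ← Finset.mul_sum, Finset.sum_ite_eq' Finset.univ (1 : N)]
        have : ∑ p : N, (if g.left * p⁻¹ ∈ N₁ then (1 : ℤ) else 0) =
            ∑ p : N, (if p ∈ N₁ then (1 : ℤ) else 0) :=
          Fintype.sum_equiv ((Equiv.inv N).trans (Equiv.mulLeft g.left)) _ _ fun p => by simp
        rw [this]
        simp

/-- Duval–Iourinski type construction: let `β ∈ Aut(N)` satisfy the `q`-orbit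
condition, `H` cyclic of order `q` with generator `b`, `θ(bᵘ) = βᵘ`, and let
`N₁` pick exactly `r < q` elements from each nontrivial `⟨β⟩`-orbit.  Then
`C(N ⋊_θ H, N₁ × H)` is a DSRG with parameters
`(mq, (m−1)r, (m−1)r²/q, (m−1)r²/q − r, (m−1)r²/q)`. -/
theorem duval_iourinski_generalized {N H : Type*} [Group N] [Group H]
    [Fintype N] [Fintype H] [DecidableEq N] [DecidableEq H]
    (β : MulAut N) (q : ℕ)
    (hq1 : ∀ a : N, (β ^ q) a = a)
    (hq2 : ∀ a : N, a ≠ 1 → ∀ u : ℕ, (β ^ u) a = a → q ∣ u)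
    (b : H) (hb : ∀ h : H, h ∈ Subgroup.zpowers b) (hH : Fintype.card H = q)
    (θ : H →* MulAut N) (hθ : ∀ u : ℕ, θ (b ^ u) = β ^ u)
    (m : ℕ) (hm : Fintype.card N = m)
    (r : ℕ) (hr0 : 0 < r) (hrq : r < q)
    (N₁ : Finset N) (hN₁ : (1 : N) ∉ N₁)
    (horb : ∀ a : N, a ≠ 1 →
      ((((Finset.range q).image fun u => (β ^ u) a) ∩ N₁).card = r)) :
    IsDSRG (cayleyAdj (N ⋊[θ] H) (Finset.univ.filter fun g => g.left ∈ N₁))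
      ((m : ℤ) * q) (((m : ℤ) - 1) * r)
      ((((m : ℤ) - 1) * (r : ℤ) ^ 2) / q)
      ((((m : ℤ) - 1) * (r : ℤ) ^ 2) / q - r)
      ((((m : ℤ) - 1) * (r : ℤ) ^ 2) / q) := by
  have hc := sum_indicator_orbit β q hq2 b hb hH θ hθ r N₁ hN₁ horb
  -- Counting pairs `(h, p)` with `θ h p ∈ N₁` in two ways.
  have hcard : (q : ℤ) * N₁.card = ((m : ℤ) - 1) * r := by
    have h1 : ∑ p : N, ∑ h : H, (if θ h p ∈ N₁ then (1 : ℤ) else 0) = q * N₁.card := by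
      rw [Finset.sum_comm]
      have : ∀ h : H, ∑ p : N, (if θ h p ∈ N₁ then (1 : ℤ) else 0) = N₁.card := by
        intro h
        rw [Fintype.sum_equiv (θ h).toEquiv _ (fun p => if p ∈ N₁ then (1 : ℤ) else 0)
          fun p => by simp]
        simp
      simp [this, hH]
    rw [← h1]
    simp only [hc]
    have : ∀ p : N, (if p = 1 then 0 else (r : ℤ)) = r - if p = 1 then (r : ℤ) else 0 := by
      intro p
      split_ifs <;> simp
    simp only [this]
    rw [Finset.sum_sub_distrib, Finset.sum_ite_eq' Finset.univ (1 : N)]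
    simp [hm]
    ring
  have hμ : (((m : ℤ) - 1) * (r : ℤ) ^ 2) / q = r * N₁.card := by
    have hq : (q : ℤ) ≠ 0 := by omega
    apply Int.ediv_eq_of_eq_mul_right hq
    linear_combination (-(r : ℤ)) * hcard
  have hS : ∑ w : N ⋊[θ] H, (if w.left ∈ N₁ then (1 : ℤ) else 0) = ((m : ℤ) - 1) * r := by
    rw [sum_semidirectProduct, ← hcard]
    simp [hH]
  rw [hμ]
  refine ⟨?_, ?_, ?_, ?_, ?_, ?_⟩
  · rw [Fintype.card_congr (sdpEquivProd θ), Fintype.card_prod, hm, hH]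
    push_cast
    rfl
  · intro i j
    simp only [cayleyAdj, Matrix.of_apply]
    split_ifs <;> simp
  · intro i
    simp [cayleyAdj, hN₁]
  · ext x y
    simp only [Matrix.mul_apply, cayleyAdj, allOnes, Matrix.of_apply, Matrix.smul_apply,
      Finset.mem_filter, Finset.mem_univ, true_and, mul_one, smul_eq_mul]
    rw [← hS]
    exact Fintype.sum_equiv (Equiv.mulRight x⁻¹) _ _ fun z => rfl
  · ext x y
    simp only [Matrix.mul_apply, cayleyAdj, allOnes, Matrix.of_apply, Matrix.smul_apply,
      Finset.mem_filter, Finset.mem_univ, true_and, mul_one, one_mul, smul_eq_mul]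
    rw [← hS]
    exact Fintype.sum_equiv ((Equiv.inv _).trans (Equiv.mulLeft y)) _ _ fun z => rfl
  · ext x y
    have hconv := sum_indicator_convolution θ r N₁ hc (y * x⁻¹)
    have hsq : (cayleyAdj (N ⋊[θ] H) (Finset.univ.filter fun g => g.left ∈ N₁) *
        cayleyAdj (N ⋊[θ] H) (Finset.univ.filter fun g => g.left ∈ N₁)) x y =
        r * N₁.card - r * (if (y * x⁻¹).left ∈ N₁ then (1 : ℤ) else 0) := by
      rw [← hconv, Matrix.mul_apply]
      refine Fintype.sum_equiv (Equiv.mulRight x⁻¹) _ _ fun z => ?_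
      have : y * x⁻¹ * (z * x⁻¹)⁻¹ = y * z⁻¹ := by group
      simp only [cayleyAdj, Matrix.of_apply, Finset.mem_filter, Finset.mem_univ, true_and,
        Equiv.coe_mulRight, this]
      congr
    rw [hsq]
    simp only [Matrix.add_apply, Matrix.sub_apply, Matrix.smul_apply, smul_eq_mul, allOnes,
      cayleyAdj, Matrix.of_apply, Finset.mem_filter, Finset.mem_univ, true_and]
    ring
end

section
/- Let N and H be finite groups, θ : H → Aut(N) a homomorphism, and G = N ⋊_θ H. Let O₁ = {e_N}, O₂, …, O_s be the distinct orbits of the H-action h∘n = θ(h)(n) on N, with sizes d_i = |O_i| satisfying d₁ ≤ d₂ ≤ ⋯ ≤ d_s, d₂ > 1, and d₂ | d_i for all 2 ≤ i ≤ s. Let r be a positive integer with r < d₂ and, for each 2 ≤ i ≤ s, choose a subset Õ_i ⊆ O_i with |Õ_i| = r·d_i/d₂. Set N₁ = ⋃_{i=2}^{s} Õ_i. Then the Cayley graph C(G, {(s, h) : s ∈ N₁, h ∈ H}) is a directed strongly regular graph with parameters (|G|, r|H|(|N|−1)/d₂, r²|H|(|N|−1)/d₂², r²|H|(|N|−1)/d₂²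 − r|H|/d₂, r²|H|(|N|−1)/d₂²). -/
/-!
Write `c = r|H|/d₂`. For every `m ≠ 1` exactly `c` elements `h` satisfy `θ h m ∈ N₁`: the map
`h ↦ θ h m` covers each point of the orbit of `m` equally often, and `N₁` contains the proportion
`r/d₂` of the orbit (`card_hits`). Counting pairs `(h, m)` with `m ≠ 1` and `θ h m ∈ N₁` by `h`
instead of by `m` then yields `d₂|N₁| = r(|N|-1)` (`card_selected`).

An entry of `A²` counts the factorisations `y x⁻¹ = v * w` with `v, w` in the connection set. If
`v = (m, h)` and `y x⁻¹` has left component `n`, then `w` has left component `θ h⁻¹ (m⁻¹ n)`, so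
each `m ∈ N₁` contributes `c`, except `m = n`, which contributes nothing as `1 ∉ N₁`
(`sum_factorisations`). Hence `A² = c (|N₁| J - A)`, which is the required identity.
-/

open Matrix

/-- The `H`-orbit of `a ∈ N` under the action `h ∘ n = θ(h)(n)`. -/
def Horbit {N H : Type*} [Group N] [Group H] [Fintype N] [Fintype H] [DecidableEq N]
    (θ : H →* MulAut N) (a : N) : Finset N :=
  Finset.image (fun h : H => θ h a) Finset.univ

/-- All nonempty fibres of `h ↦ θ h m` have the size of the stabiliser of `m`. -/
lemma card_fibre {N H : Type*} [Group N] [Group H] [Fintype N] [Fintype H] [DecidableEq N]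
    (θ : H →* MulAut N) (m b : N) (hb : b ∈ Horbit θ m) :
    (Finset.univ.filter fun h : H => θ h m = b).card
      = (Finset.univ.filter fun h : H => θ h m = m).card := by
  obtain ⟨h₀, -, rfl⟩ := Finset.mem_image.1 hb
  symm
  refine Finset.card_equiv (Equiv.mulLeft h₀) fun h => ?_
  simp

/-- The counts `|H|` and `#{h | θ h m ∈ N₁}` are both the stabiliser size times a number of orbit
points, so the proportion of `N₁` in the orbit carries over to `H`. -/
lemma card_hits {N H : Type*} [Group N] [Group H] [Fintype N] [Fintype H] [DecidableEq N]
    (θ : H →* MulAut N) (d r : ℕ) (N₁ : Finset N) (m : N)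
    (hm : d * (Horbit θ m ∩ N₁).card = r * (Horbit θ m).card) :
    d * (Finset.univ.filter fun h : H => θ h m ∈ N₁).card = r * Fintype.card H := by
  have h1 : Fintype.card H
      = (Horbit θ m).card * (Finset.univ.filter fun h : H => θ h m = m).card := by
    rw [← Finset.card_univ, Finset.card_eq_sum_card_fiberwise (f := fun h : H => θ h m)
      (t := Horbit θ m) (fun h _ => Finset.mem_coe.2 (Finset.mem_image_of_mem _ (Finset.mem_univ h)))]
    exact Finset.sum_const_nat fun b hb => card_fibre θ m b hb
  have h2 : (Finset.univ.filter fun h : H => θ h m ∈ N₁).card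
      = (Horbit θ m ∩ N₁).card * (Finset.univ.filter fun h : H => θ h m = m).card := by
    rw [Finset.card_eq_sum_card_fiberwise (f := fun h : H => θ h m) (t := Horbit θ m ∩ N₁)]
    · refine Finset.sum_const_nat fun b hb => ?_
      rw [Finset.mem_inter] at hb
      rw [← card_fibre θ m b hb.1, Finset.filter_filter]
      congr 1
      ext h
      simp only [Finset.mem_filter, Finset.mem_univ, true_and, and_iff_right_iff_imp]
      rintro rfl
      exact hb.2
    · intro h hh
      have hh' : θ h m ∈ N₁ := (Finset.mem_filter.1 hh).2
      exact Finset.mem_coe.2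
        (Finset.mem_inter.2 ⟨Finset.mem_image_of_mem _ (Finset.mem_univ h), hh'⟩)
  rw [h1, h2, ← mul_assoc, ← mul_assoc, hm]

/-- Double counting of the pairs `(h, m)` with `m ≠ 1` and `θ h m ∈ N₁`: each automorphism `θ h`
permutes `N` and fixes `1`, so each `h` accounts for `|N₁|` pairs. -/
lemma card_selected {N H : Type*} [Group N] [Group H] [Fintype N] [Fintype H] [DecidableEq N]
    (θ : H →* MulAut N) (c : ℤ) (N₁ : Finset N) (hN₁ : (1 : N) ∉ N₁)
    (hc : ∀ m : N, m ≠ 1 → ∑ h : H, (if θ h m ∈ N₁ then (1 : ℤ) else 0) = c) :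
    (Fintype.card H : ℤ) * N₁.card = ((Fintype.card N : ℤ) - 1) * c := by
  have h1 : ∑ h : H, ∑ m : N, (if θ h m ∈ N₁ then (1 : ℤ) else 0)
      = (Fintype.card H : ℤ) * N₁.card := by
    have : ∀ h : H, ∑ m : N, (if θ h m ∈ N₁ then (1 : ℤ) else 0) = N₁.card := fun h => by
      refine (Equiv.sum_comp (θ h).toEquiv (fun m => if m ∈ N₁ then (1 : ℤ) else 0)).trans ?_
      simp
    simp [this]
  have h2 : ∀ m : N, ∑ h : H, (if θ h m ∈ N₁ then (1 : ℤ) else 0)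
      = c - if m = 1 then c else 0 := by
    intro m
    by_cases hm : m = 1
    · simp [hm, hN₁]
    · simp [hm, hc m hm]
  rw [← h1, Finset.sum_comm]
  simp only [h2, Finset.sum_sub_distrib]
  simp
  ring

lemma sum_sdp {N H : Type*} [Group N] [Group H] [Fintype N] [Fintype H]
    (θ : H →* MulAut N) (f : N ⋊[θ] H → ℤ) :
    ∑ g, f g = ∑ m : N, ∑ h : H, f ⟨m, h⟩ := by
  rw [← Fintype.sum_prod_type']
  exact ((sdpEquivProd θ).symm.sum_comp f).symm

/-- The number of factorisations `g = v * w` in which both factors have left component in `N₁`. -/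
lemma sum_factorisations {N H : Type*} [Group N] [Group H] [Fintype N] [Fintype H] [DecidableEq N]
    (θ : H →* MulAut N) (c : ℤ) (N₁ : Finset N) (hN₁ : (1 : N) ∉ N₁)
    (hc : ∀ m : N, m ≠ 1 → ∑ h : H, (if θ h m ∈ N₁ then (1 : ℤ) else 0) = c)
    (g : N ⋊[θ] H) :
    ∑ v : N ⋊[θ] H, (if (v⁻¹ * g).left ∈ N₁ then (1 : ℤ) else 0) *
        (if v.left ∈ N₁ then (1 : ℤ) else 0)
      = c * (N₁.card - if g.left ∈ N₁ then (1 : ℤ) else 0) := by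
  have hm : ∀ m : N, ∑ h : H, (if ((⟨m, h⟩ : N ⋊[θ] H)⁻¹ * g).left ∈ N₁ then (1 : ℤ) else 0)
      = c - if g.left = m then c else 0 := by
    intro m
    have h1 : ∀ h : H, ((⟨m, h⟩ : N ⋊[θ] H)⁻¹ * g).left = θ h⁻¹ (m⁻¹ * g.left) := by
      intro h
      simp
    simp only [h1]
    refine (Equiv.sum_comp (Equiv.inv H)
      (fun h => if θ h (m⁻¹ * g.left) ∈ N₁ then (1 : ℤ) else 0)).trans ?_
    by_cases hgm : g.left = m
    · simp [hgm, hN₁]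
    · rw [hc _ (fun h => hgm (inv_mul_eq_one.1 h).symm)]
      simp [hgm]
  rw [sum_sdp]
  calc _ = ∑ m : N, (c - if g.left = m then c else 0) * (if m ∈ N₁ then (1 : ℤ) else 0) :=
        Finset.sum_congr rfl fun m _ => by rw [← hm, Finset.sum_mul]
    _ = _ := by
      simp only [sub_mul, Finset.sum_sub_distrib, ← Finset.mul_sum, ite_mul, zero_mul,
        Finset.sum_ite_eq, Finset.mem_univ, if_true, Finset.sum_boole, Finset.filter_univ_mem,
        mul_sub]

/-- Construction without the `q`-orbit condition: if `d₂ > 1` is the smallest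
size of a nontrivial `H`-orbit on `N`, `d₂` divides the size of every nontrivial
orbit, `0 < r < d₂`, and `N₁ ⊆ N \ {e}` picks exactly `r·|O|/d₂` elements from
each nontrivial orbit `O`, then `C(N ⋊_θ H, N₁ × H)` is a DSRG with parameters
`(|G|, r|H|(|N|−1)/d₂, r²|H|(|N|−1)/d₂², r²|H|(|N|−1)/d₂² − r|H|/d₂, r²|H|(|N|−1)/d₂²)`. -/
theorem sdp_orbit_construction {N H : Type*} [Group N] [Group H]
    [Fintype N] [Fintype H] [DecidableEq N] [DecidableEq H]
    (θ : H →* MulAut N) (d₂ : ℕ) (hd₂ : 1 < d₂)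
    (hmin : ∀ a : N, a ≠ 1 → d₂ ≤ (Horbit θ a).card)
    (hdvd : ∀ a : N, a ≠ 1 → d₂ ∣ (Horbit θ a).card)
    (hex : ∃ a : N, a ≠ 1 ∧ (Horbit θ a).card = d₂)
    (r : ℕ) (hr0 : 0 < r) (hr : r < d₂)
    (N₁ : Finset N) (hN₁ : (1 : N) ∉ N₁)
    (hchoice : ∀ a : N, a ≠ 1 → (Horbit θ a ∩ N₁).card = r * (Horbit θ a).card / d₂) :
    IsDSRG (cayleyAdj (N ⋊[θ] H) (Finset.univ.filter fun g => g.left ∈ N₁))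
      (Fintype.card (N ⋊[θ] H))
      (((r : ℤ) * (Fintype.card H) * ((Fintype.card N : ℤ) - 1)) / d₂)
      (((r : ℤ) ^ 2 * (Fintype.card H) * ((Fintype.card N : ℤ) - 1)) / (d₂ : ℤ) ^ 2)
      (((r : ℤ) ^ 2 * (Fintype.card H) * ((Fintype.card N : ℤ) - 1)) / (d₂ : ℤ) ^ 2 -
        ((r : ℤ) * (Fintype.card H)) / d₂)
      (((r : ℤ) ^ 2 * (Fintype.card H) * ((Fintype.card N : ℤ) - 1)) / (d₂ : ℤ) ^ 2) := by
  have hd0 : (d₂ : ℤ) ≠ 0 := by exact_mod_cast (by omega : d₂ ≠ 0)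
  have hhits : ∀ m : N, m ≠ 1 →
      (d₂ : ℤ) * ∑ h : H, (if θ h m ∈ N₁ then (1 : ℤ) else 0) = r * Fintype.card H := by
    intro m hm
    have h := card_hits θ d₂ r N₁ m (by
      rw [hchoice m hm, Nat.mul_div_cancel' (Dvd.dvd.mul_left (hdvd m hm) r)])
    rw [Finset.sum_boole]
    exact_mod_cast h
  obtain ⟨a, ha, -⟩ := hex
  obtain ⟨c, hc⟩ : ∃ c : ℤ, (r : ℤ) * Fintype.card H = d₂ * c := ⟨_, (hhits a ha).symm⟩
  have hcm : ∀ m : N, m ≠ 1 → ∑ h : H, (if θ h m ∈ N₁ then (1 : ℤ) else 0) = c :=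
    fun m hm => mul_left_cancel₀ hd0 ((hhits m hm).trans hc)
  have hsel := card_selected θ c N₁ hN₁ hcm
  -- The parameters as exact integers, so that every division in the statement is exact.
  have hk : ((r : ℤ) * (Fintype.card H) * ((Fintype.card N : ℤ) - 1)) / d₂
      = (Fintype.card H : ℤ) * N₁.card :=
    Int.ediv_eq_of_eq_mul_right hd0 (by rw [hsel, hc]; ring)
  have hH : (Fintype.card H : ℤ) ≠ 0 := by exact_mod_cast Fintype.card_ne_zero
  have hN : (r : ℤ) * ((Fintype.card N : ℤ) - 1) = d₂ * N₁.card :=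
    mul_left_cancel₀ hH (by linear_combination ((Fintype.card N : ℤ) - 1) * hc - d₂ * hsel)
  have hμ : ((r : ℤ) ^ 2 * (Fintype.card H) * ((Fintype.card N : ℤ) - 1)) / (d₂ : ℤ) ^ 2
      = c * N₁.card :=
    Int.ediv_eq_of_eq_mul_right (pow_ne_zero 2 hd0)
      (by linear_combination (r : ℤ) * ((Fintype.card N : ℤ) - 1) * hc + d₂ * c * hN)
  have hcd : ((r : ℤ) * (Fintype.card H)) / d₂ = c := Int.ediv_eq_of_eq_mul_right hd0 hc
  rw [hk, hμ, hcd]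
  have hA : ∀ x y, cayleyAdj (N ⋊[θ] H) (Finset.univ.filter fun g => g.left ∈ N₁) x y
      = if (y * x⁻¹).left ∈ N₁ then (1 : ℤ) else 0 := by
    intro x y
    simp only [cayleyAdj, Matrix.of_apply, Finset.mem_filter, Finset.mem_univ, true_and]
  have hS : ∑ g : N ⋊[θ] H, (if g.left ∈ N₁ then (1 : ℤ) else 0)
      = (Fintype.card H : ℤ) * N₁.card := by
    rw [sum_sdp, Finset.sum_comm]
    simp
  refine ⟨rfl, ?_, ?_, ?_, ?_, ?_⟩
  · intro x y
    rw [hA]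
    split_ifs <;> simp
  · intro x
    rw [hA]
    simp [hN₁]
  · ext x y
    simp only [Matrix.mul_apply, allOnes, Matrix.of_apply, Matrix.smul_apply, hA, mul_one,
      smul_eq_mul]
    rw [← hS]
    exact Equiv.sum_comp (Equiv.mulRight x⁻¹)
      (fun g : N ⋊[θ] H => if g.left ∈ N₁ then (1 : ℤ) else 0)
  · ext x y
    simp only [Matrix.mul_apply, allOnes, Matrix.of_apply, Matrix.smul_apply, hA, one_mul,
      mul_one, smul_eq_mul]
    rw [← hS]
    exact ((Equiv.inv _).trans (Equiv.mulLeft y)).sum_comp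
      (fun g : N ⋊[θ] H => if g.left ∈ N₁ then (1 : ℤ) else 0)
  · ext x y
    -- Substituting `v = y * z⁻¹` for the intermediate vertex `z` makes `z * x⁻¹ = v⁻¹ * (y * x⁻¹)`.
    have key : ∑ z : N ⋊[θ] H, (if (z * x⁻¹).left ∈ N₁ then (1 : ℤ) else 0) *
        (if (y * z⁻¹).left ∈ N₁ then (1 : ℤ) else 0)
        = c * (N₁.card - if (y * x⁻¹).left ∈ N₁ then (1 : ℤ) else 0) := by
      rw [← sum_factorisations θ c N₁ hN₁ hcm (y * x⁻¹)]
      refine Fintype.sum_equiv ((Equiv.inv _).trans (Equiv.mulLeft y)) _ _ fun z => ?_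
      have hz : (y * z⁻¹)⁻¹ * (y * x⁻¹) = z * x⁻¹ := by group
      simp only [Equiv.trans_apply, Equiv.inv_apply, Equiv.coe_mulLeft, hz]
    simp only [Matrix.mul_apply, Matrix.add_apply, Matrix.sub_apply, Matrix.smul_apply, hA,
      allOnes, Matrix.of_apply, smul_eq_mul]
    rw [key]
    ring
end

section
/- Let D_n = ⟨x, a | xⁿ = a² = e, ax = x⁻¹a⟩ be the dihedral group of order 2n, with cyclic subgroup C_n = ⟨x⟩. Let X ⊆ C_n \ {e} and Y ⊆ C_n. The Cayley graph C(D_n, X ∪ Ya) is a directed strongly regular graph with parameters (2n, |X| + |Y|, μ, λ, t) if and only if in the group ring ℤ[C_n]: (i) (X̄ + X̄⁽⁻¹⁾)·Ȳ = (λ − μ)·Ȳ + μ·C̄_n, and (ii) X̄² + Ȳ·Ȳ⁽⁻¹⁾ = (t − μ)·e + (λ − μ)·X̄ + μ·C̄_n, where X̄⁽⁻¹⁾ = ∑_{g∈X} g⁻¹. -/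
/-!
The number of walks of length two from `x` to `y` in `C(G, S)` is the coefficient of `y x⁻¹` in
`S̄²`, so the matrix identity in the definition of a DSRG is an identity in `ℤ[D_n]`. Splitting it
along the cosets `C_n` and `C_n a`, and moving `a` to the right by `a x = x⁻¹ a`, gives
`S̄² = (X̄² + Ȳ Ȳ⁽⁻¹⁾) + (X̄ + X̄⁽⁻¹⁾) Ȳ a`: the coset of rotations yields the equation for
`X̄² + Ȳ Ȳ⁽⁻¹⁾` and the coset of reflections the one for `(X̄ + X̄⁽⁻¹⁾) Ȳ`. The remaining DSRG
conditions hold for every Cayley graph whose connection set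
misses the identity (`cayleyAdj_mul_allOnes`, `allOnes_mul_cayleyAdj`).

Everything is carried out on coefficients. The two group ring identities become identities between
convolutions of the indicators `ind X` and `ind Y` on `ZMod n` (`ringEq_one_iff`,
`ringEq_two_iff`). The entry of the matrix identity at `(x, y)` is one of these, after a change of
the summation variable depending on the cosets of `x` and `y`.
-/

open Matrix

/-- The connection set `X ∪ Ya ⊆ D_n`, where `X, Y ⊆ C_n = ⟨x⟩` are identified
with subsets of `ZMod n` (the exponent of `x = r 1`), and `a = sr 0`. -/
def dihedralS (n : ℕ) (X Y : Finset (ZMod n)) : Finset (DihedralGroup n) :=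
  X.image DihedralGroup.r ∪
    Y.image fun i => DihedralGroup.r i * DihedralGroup.sr 0

/-- `Z̄ = ∑_{g ∈ Z} g` in the group ring `ℤ[C_n]` of the cyclic group `C_n`,
realised as `AddMonoidAlgebra ℤ (ZMod n)`. -/
noncomputable def cycBar (n : ℕ) (Z : Finset (ZMod n)) : AddMonoidAlgebra ℤ (ZMod n) :=
  ∑ i ∈ Z, AddMonoidAlgebra.single i 1

/-- The integer-valued indicator function of `Z ⊆ ZMod n`, that is, the coefficient function of
`Z̄`. -/
def ind {n : ℕ} (Z : Finset (ZMod n)) (i : ZMod n) : ℤ := if i ∈ Z then 1 else 0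

lemma cycBar_coeff (n : ℕ) (Z : Finset (ZMod n)) (d : ZMod n) :
    (cycBar n Z).coeff d = ind Z d := by
  simp [cycBar, ind, AddMonoidAlgebra.coeff_sum, Finsupp.finsetSum_apply,
    Finsupp.single_apply]

lemma ind_image_neg {n : ℕ} (Z : Finset (ZMod n)) (d : ZMod n) :
    ind (Z.image fun i => -i) d = ind Z (-d) := by
  have h : d ∈ Z.image (fun i => -i) ↔ -d ∈ Z := by
    simp only [Finset.mem_image]
    exact ⟨by rintro ⟨i, hi, rfl⟩; simpa using hi, fun h => ⟨-d, h, neg_neg d⟩⟩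
  simp only [ind, h]

lemma coeff_mul_eq_sum {n : ℕ} [NeZero n] (p q : AddMonoidAlgebra ℤ (ZMod n)) (d : ZMod n) :
    (p * q).coeff d = ∑ k, p.coeff k * q.coeff (d - k) := by
  rw [AddMonoidAlgebra.coeff_mul_apply_left, Finsupp.sum_fintype _ _ (by simp)]
  simp only [neg_add_eq_sub]

lemma ringEq_one_iff (n : ℕ) [NeZero n] (X Y : Finset (ZMod n)) (μ lam : ℤ) :
    ((cycBar n X + cycBar n (X.image (fun i => -i))) * cycBar n Y =
        (lam - μ) • cycBar n Y + μ • cycBar n Finset.univ) ↔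
      ∀ d, ∑ k, ind X k * ind Y (d - k) + ∑ k, ind X (-k) * ind Y (d - k) =
        (lam - μ) * ind Y d + μ := by
  rw [← AddMonoidAlgebra.coeff_inj, DFunLike.ext_iff]
  refine forall_congr' fun d => ?_
  rw [coeff_mul_eq_sum, ← Finset.sum_add_distrib]
  simp only [cycBar_coeff, ind_image_neg, add_mul, AddMonoidAlgebra.coeff_add,
    AddMonoidAlgebra.coeff_smul, Finsupp.add_apply, Finsupp.smul_apply, smul_eq_mul]
  simp [ind]

lemma ringEq_two_iff (n : ℕ) [NeZero n] (X Y : Finset (ZMod n)) (μ lam t : ℤ) :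
    (cycBar n X ^ 2 + cycBar n Y * cycBar n (Y.image (fun i => -i)) =
        (t - μ) • (1 : AddMonoidAlgebra ℤ (ZMod n)) + (lam - μ) • cycBar n X +
          μ • cycBar n Finset.univ) ↔
      ∀ d, ∑ k, ind X k * ind X (d - k) + ∑ k, ind Y k * ind Y (k - d) =
        (t - μ) * (if d = 0 then 1 else 0) + (lam - μ) * ind X d + μ := by
  rw [← AddMonoidAlgebra.coeff_inj, DFunLike.ext_iff]
  refine forall_congr' fun d => ?_
  rw [sq, AddMonoidAlgebra.coeff_add, Finsupp.add_apply, coeff_mul_eq_sum, coeff_mul_eq_sum]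
  simp only [cycBar_coeff, ind_image_neg, neg_sub, AddMonoidAlgebra.coeff_add,
    AddMonoidAlgebra.coeff_smul, Finsupp.add_apply, Finsupp.smul_apply, smul_eq_mul,
    AddMonoidAlgebra.one_def, AddMonoidAlgebra.coeff_single, Finsupp.single_apply]
  simp [ind, eq_comm]

lemma cayleyAdj_mul_allOnes (G : Type*) [Group G] [Fintype G] [DecidableEq G] (S : Finset G) :
    cayleyAdj G S * allOnes G = (S.card : ℤ) • allOnes G := by
  ext x y
  simp only [Matrix.mul_apply, cayleyAdj, allOnes, Matrix.of_apply, Matrix.smul_apply, mul_one,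
    smul_eq_mul]
  exact (Fintype.sum_equiv (Equiv.mulRight x⁻¹) _ (fun z => if z ∈ S then (1 : ℤ) else 0)
    fun _ => rfl).trans (by simp)

lemma allOnes_mul_cayleyAdj (G : Type*) [Group G] [Fintype G] [DecidableEq G] (S : Finset G) :
    allOnes G * cayleyAdj G S = (S.card : ℤ) • allOnes G := by
  ext x y
  simp only [Matrix.mul_apply, cayleyAdj, allOnes, Matrix.of_apply, Matrix.smul_apply, mul_one,
    one_mul, smul_eq_mul]
  exact (Fintype.sum_equiv ((Equiv.inv G).trans (Equiv.mulLeft y)) _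
    (fun z => if z ∈ S then (1 : ℤ) else 0) fun _ => rfl).trans (by simp)

lemma r_mem_dihedralS {n : ℕ} (X Y : Finset (ZMod n)) (i : ZMod n) :
    DihedralGroup.r i ∈ dihedralS n X Y ↔ i ∈ X := by
  simp [dihedralS]

/-- Since `x ^ i * a = sr (-i)` in Mathlib's convention, the reflection `sr i` lies in `Ya` exactly
when `-i ∈ Y`. -/
lemma sr_mem_dihedralS {n : ℕ} (X Y : Finset (ZMod n)) (i : ZMod n) :
    DihedralGroup.sr i ∈ dihedralS n X Y ↔ -i ∈ Y := by
  simp only [dihedralS, Finset.mem_union, Finset.mem_image, DihedralGroup.r_mul_sr, zero_sub,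
    DihedralGroup.sr.injEq, reduceCtorEq, and_false, exists_false, false_or]
  exact ⟨by rintro ⟨j, hj, rfl⟩; simpa using hj, fun h => ⟨-i, h, neg_neg i⟩⟩

lemma card_dihedralS (n : ℕ) (X Y : Finset (ZMod n)) :
    (dihedralS n X Y).card = X.card + Y.card := by
  rw [dihedralS, Finset.card_union_of_disjoint, Finset.card_image_of_injective,
    Finset.card_image_of_injective]
  · intro i j h
    simpa using h
  · intro i j h
    simpa using h
  · simp [Finset.disjoint_left]

lemma sum_dihedral {n : ℕ} [NeZero n] (F : DihedralGroup n → ℤ) :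
    ∑ x, F x = ∑ i, F (.r i) + ∑ i, F (.sr i) := by
  rw [← DihedralGroup.equivSum.symm.sum_comp, Fintype.sum_sum_type]
  rfl

section Entries

variable {n : ℕ} [NeZero n] (X Y : Finset (ZMod n)) (i j : ZMod n)

lemma adj_r_r : cayleyAdj (DihedralGroup n) (dihedralS n X Y) (.r i) (.r j) = ind X (j - i) := by
  simp [cayleyAdj, ind, r_mem_dihedralS, sub_eq_add_neg]

lemma adj_r_sr : cayleyAdj (DihedralGroup n) (dihedralS n X Y) (.r i) (.sr j) = ind Y (i - j) := by
  simp [cayleyAdj, ind, sr_mem_dihedralS, sub_eq_add_neg]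

lemma adj_sr_r : cayleyAdj (DihedralGroup n) (dihedralS n X Y) (.sr i) (.r j) = ind Y (j - i) := by
  simp [cayleyAdj, ind, sr_mem_dihedralS]

lemma adj_sr_sr : cayleyAdj (DihedralGroup n) (dihedralS n X Y) (.sr i) (.sr j) = ind X (i - j) := by
  simp [cayleyAdj, ind, r_mem_dihedralS]

lemma adj_sq_r_r :
    (cayleyAdj (DihedralGroup n) (dihedralS n X Y) ^ 2) (.r i) (.r j) =
    ∑ k, ind X k * ind X (j - i - k) + ∑ k, ind Y k * ind Y (k - (j - i)) := by
  simp only [sq, Matrix.mul_apply, sum_dihedral, adj_r_r, adj_r_sr, adj_sr_r]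
  congr 1
  · refine Fintype.sum_equiv (Equiv.subRight i) _ _ fun k => ?_
    rw [Equiv.subRight_apply, show j - i - (k - i) = j - k by abel]
  · refine Fintype.sum_equiv (Equiv.subLeft j) _ _ fun k => ?_
    rw [Equiv.subLeft_apply, mul_comm, show j - k - (j - i) = i - k by abel]

lemma adj_sq_sr_sr :
    (cayleyAdj (DihedralGroup n) (dihedralS n X Y) ^ 2) (.sr i) (.sr j) =
    ∑ k, ind X k * ind X (i - j - k) + ∑ k, ind Y k * ind Y (k - (i - j)) := by
  simp only [sq, Matrix.mul_apply, sum_dihedral, adj_sr_sr, adj_r_sr, adj_sr_r]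
  rw [add_comm]
  congr 1
  · refine Fintype.sum_equiv (Equiv.subRight j) _ _ fun k => ?_
    rw [Equiv.subRight_apply, mul_comm, show i - j - (k - j) = i - k by abel]
  · refine Fintype.sum_equiv (Equiv.subRight j) _ _ fun k => ?_
    rw [Equiv.subRight_apply, mul_comm, show k - j - (i - j) = k - i by abel]

lemma adj_sq_r_sr :
    (cayleyAdj (DihedralGroup n) (dihedralS n X Y) ^ 2) (.r i) (.sr j) =
    ∑ k, ind X k * ind Y (i - j - k) + ∑ k, ind X (-k) * ind Y (i - j - k) := by
  simp only [sq, Matrix.mul_apply, sum_dihedral, adj_r_r, adj_r_sr, adj_sr_sr]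
  rw [add_comm]
  congr 1
  · refine Fintype.sum_equiv (Equiv.subRight j) _ _ fun k => ?_
    rw [Equiv.subRight_apply, mul_comm, show i - j - (k - j) = i - k by abel]
  · refine Fintype.sum_equiv (Equiv.subLeft i) _ _ fun k => ?_
    rw [Equiv.subLeft_apply, neg_sub, show i - j - (i - k) = k - j by abel]

lemma adj_sq_sr_r :
    (cayleyAdj (DihedralGroup n) (dihedralS n X Y) ^ 2) (.sr i) (.r j) =
    ∑ k, ind X k * ind Y (j - i - k) + ∑ k, ind X (-k) * ind Y (j - i - k) := by
  simp only [sq, Matrix.mul_apply, sum_dihedral, adj_r_r, adj_sr_r, adj_sr_sr]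
  congr 1
  · refine Fintype.sum_equiv (Equiv.subLeft j) _ _ fun k => ?_
    rw [Equiv.subLeft_apply, mul_comm, show j - i - (j - k) = k - i by abel]
  · refine Fintype.sum_equiv (Equiv.subRight i) _ _ fun k => ?_
    rw [Equiv.subRight_apply, neg_sub, show j - i - (k - i) = j - k by abel]

end Entries

/-- The Cayley graph `C(D_n, X ∪ Ya)` with `X ⊆ C_n \ {e}`, `Y ⊆ C_n` is a DSRG
with parameters `(2n, |X| + |Y|, μ, λ, t)` iff, in `ℤ[C_n]`,
`(X̄ + X̄⁽⁻¹⁾)·Ȳ = (λ−μ)·Ȳ + μ·C̄_n` and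
`X̄² + Ȳ·Ȳ⁽⁻¹⁾ = (t−μ)·e + (λ−μ)·X̄ + μ·C̄_n`. -/
theorem dihedral_cayley_dsrg_iff (n : ℕ) [NeZero n] (X Y : Finset (ZMod n))
    (hX : (0 : ZMod n) ∉ X) (μ lam t : ℤ) :
    IsDSRG (cayleyAdj (DihedralGroup n) (dihedralS n X Y))
        (2 * n) ((X.card : ℤ) + Y.card) μ lam t ↔
      ((cycBar n X + cycBar n (X.image (fun i => -i))) * cycBar n Y =
          (lam - μ) • cycBar n Y + μ • cycBar n Finset.univ ∧
        cycBar n X ^ 2 + cycBar n Y * cycBar n (Y.image (fun i => -i)) =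
          (t - μ) • (1 : AddMonoidAlgebra ℤ (ZMod n)) + (lam - μ) • cycBar n X +
            μ • cycBar n Finset.univ) := by
  have rhs_apply : ∀ (A : Matrix (DihedralGroup n) (DihedralGroup n) ℤ) (x y),
      (t • (1 : Matrix (DihedralGroup n) (DihedralGroup n) ℤ) + lam • A +
        μ • (allOnes (DihedralGroup n) - 1 - A)) x y =
      (t - μ) * (if x = y then 1 else 0) + (lam - μ) * A x y + μ := by
    intro A x y
    simp only [Matrix.add_apply, Matrix.smul_apply, Matrix.sub_apply, Matrix.one_apply, allOnes,
      Matrix.of_apply, smul_eq_mul]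
    ring
  rw [ringEq_one_iff, ringEq_two_iff]
  constructor
  · rintro ⟨-, -, -, -, -, hsq⟩
    rw [← sq] at hsq
    refine ⟨fun d => ?_, fun d => ?_⟩
    · have h := congr_fun (congr_fun hsq (.r d)) (.sr 0)
      rw [rhs_apply, adj_sq_r_sr, adj_r_sr] at h
      simpa using h
    · have h := congr_fun (congr_fun hsq (.r 0)) (.r d)
      rw [rhs_apply, adj_sq_r_r, adj_r_r] at h
      simpa [eq_comm (a := (0 : ZMod n)), -DihedralGroup.r_zero] using h
  · rintro ⟨h1, h2⟩
    refine ⟨?_, fun x y => ?_, fun x => ?_, ?_, ?_, ?_⟩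
    · rw [DihedralGroup.card]
      push_cast
      rfl
    · simp only [cayleyAdj, Matrix.of_apply]
      split_ifs <;> simp
    · have : (1 : DihedralGroup n) ∉ dihedralS n X Y := by
        rwa [← DihedralGroup.r_zero, r_mem_dihedralS]
      simp [cayleyAdj, this]
    · rw [cayleyAdj_mul_allOnes, card_dihedralS, Nat.cast_add]
    · rw [allOnes_mul_cayleyAdj, card_dihedralS, Nat.cast_add]
    · rw [← sq]
      ext x y
      rw [rhs_apply]
      rcases x with i | i <;> rcases y with j | j
      · rw [adj_sq_r_r, adj_r_r, h2]
        simp [sub_eq_zero, eq_comm]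
      · rw [adj_sq_r_sr, adj_r_sr, h1]
        simp
      · rw [adj_sq_sr_r, adj_sr_r, h1]
        simp
      · rw [adj_sq_sr_sr, adj_sr_sr, h2]
        simp [sub_eq_zero]
end
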